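/- arXiv:1707.03492 — 15 statements merged into one kernel-verified Lean document; each statement's English description precedes it below -/
import Mathlib

section
/- Let n ≥ 2 be an integer and let x : ℕ → Fin (n+1) → ℝ be a sequence of configurations of n+1 points on the real line such that for every time t and every index i with 1 ≤ i ≤ n−1 one has x (t+1) i = (x t (i−1) + x t (i+1))/2. Suppose that x t 0 → a and x t n → b as t → ∞, for some real numbers a and b. Then for every 0 ≤ i ≤ n, x t i → a + (i/n)·(b − a) as t → ∞; in particular the points converge to equidistant positions between a and b. -/
open Filter Topology

theorem spreading_aux (n : ℕ) (y : ℕ → ℕ → ℝ)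
    (hy : ∀ t i, i + 2 ≤ n → y (t + 1) (i + 1) = (y t i + y t (i + 2)) / 2)
    (h0 : Tendsto (fun t => y t 0) atTop (nhds 0))
    (h1 : Tendsto (fun t => y t n) atTop (nhds 0)) (i : ℕ) (hi : i ≤ n) :
    Tendsto (fun t => y t i) atTop (nhds 0) := by
  rw [Metric.tendsto_atTop]
  intro ε hε
  obtain ⟨T0, hT0⟩ := Metric.tendsto_atTop.1 h0 (ε / 2) (by linarith)
  obtain ⟨T1, hT1⟩ := Metric.tendsto_atTop.1 h1 (ε / 2) (by linarith)
  simp only [Real.dist_eq, sub_zero] at hT0 hT1 ⊢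
  set T := max T0 T1 with hT
  set M := ∑ j ∈ Finset.range (n + 1), |y T j| with hM
  have hM0 : 0 ≤ M := Finset.sum_nonneg fun _ _ => abs_nonneg _
  set W : ℝ := 1 + (n : ℝ) ^ 2 with hW
  have hW1 : 1 ≤ W := by rw [hW]; nlinarith [sq_nonneg (n : ℝ)]
  set q : ℝ := 1 - 1 / W with hq
  have hq0 : 0 ≤ q := by
    have : 1 / W ≤ 1 := by rw [div_le_one (by linarith)]; exact hW1
    rw [hq]; linarith
  have hq1 : q < 1 := by
    have : 0 < 1 / W := by positivity
    rw [hq]; linarith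
  have hw1 : ∀ j : ℕ, j ≤ n → (1 : ℝ) ≤ 1 + j * (n - j) := by
    intro j hj
    have hj' : (j : ℝ) ≤ n := by exact_mod_cast hj
    have : 0 ≤ (j : ℝ) * (n - j) := mul_nonneg (by positivity) (by linarith)
    linarith
  have key : ∀ k j : ℕ, j ≤ n → |y (T + k) j| ≤ ε / 2 + M * q ^ k * (1 + j * (n - j)) := by
    intro k
    induction k with
    | zero =>
      intro j hj
      have h : |y T j| ≤ M :=
        Finset.single_le_sum (f := fun j => |y T j|) (fun _ _ => abs_nonneg _)
          (Finset.mem_range.2 (by omega))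
      have := mul_le_mul_of_nonneg_left (hw1 j hj) hM0
      simp only [add_zero, pow_zero, mul_one] at this ⊢
      linarith
    | succ k ih =>
      intro j hj
      have hnn : 0 ≤ M * q ^ (k + 1) * (1 + j * (n - j)) :=
        mul_nonneg (by positivity) (by linarith [hw1 j hj])
      rcases j with _ | j
      · have := hT0 (T + (k + 1)) (by omega)
        exact this.le.trans (le_add_of_nonneg_right hnn)
      rcases Nat.lt_or_ge n (j + 2) with hlt | hge
      · have e : j + 1 = n := by omega
        have := hT1 (T + (k + 1)) (by omega)
        rw [← e] at this
        linarith
      have e1 := ih j (by omega)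
      have e2 := ih (j + 2) hge
      rw [← add_assoc, hy _ _ hge]
      have hjn : (j : ℝ) + 2 ≤ n := by exact_mod_cast hge
      have hj0 : (0 : ℝ) ≤ j := by positivity
      have e3 : ((1 : ℝ) + ((j + 1 : ℕ) : ℝ) * (n - ((j + 1 : ℕ) : ℝ))) - 1
          ≤ q * (1 + ((j + 1 : ℕ) : ℝ) * (n - ((j + 1 : ℕ) : ℝ))) := by
        have hle : (1 : ℝ) + ((j + 1 : ℕ) : ℝ) * (n - ((j + 1 : ℕ) : ℝ)) ≤ W := by
          rw [hW]; push_cast; nlinarith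
        have := (div_le_one (by linarith : 0 < W)).2 hle
        rw [hq, sub_mul, one_mul, one_div, inv_mul_eq_div]
        linarith
      have e4 := mul_le_mul_of_nonneg_left e3 (by positivity : 0 ≤ M * q ^ k)
      have e5 : |(y (T + k) j + y (T + k) (j + 2)) / 2|
          ≤ (|y (T + k) j| + |y (T + k) (j + 2)|) / 2 := by
        rw [abs_div, abs_two]
        linarith [abs_add_le (y (T + k) j) (y (T + k) (j + 2))]
      rw [pow_succ]
      push_cast at e1 e2 e4 ⊢
      nlinarith
  have hlim : Tendsto (fun k : ℕ => M * q ^ k * (1 + (i : ℝ) * (n - i))) atTop (nhds 0) := by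
    have := ((tendsto_pow_atTop_nhds_zero_of_lt_one hq0 hq1).const_mul M).mul_const
      (1 + (i : ℝ) * (n - i))
    simpa using this
  obtain ⟨K, hK⟩ := eventually_atTop.1 (hlim.eventually (gt_mem_nhds (half_pos hε)))
  refine ⟨T + K, fun t ht => ?_⟩
  obtain ⟨k, rfl⟩ := Nat.exists_eq_add_of_le (show T ≤ t by omega)
  have := key k i hi
  have := hK k (by omega)
  linarith

/-- Spreading with convergent endpoints (generalized Cohen–Peleg):
interior points move to the midpoint of their index-neighbours, the two
extremal points converge to `a` and `b`; then every point converges to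
the corresponding equidistant position between `a` and `b`. -/
theorem spreading_with_moving_endpoints
    (n : ℕ) (hn : 2 ≤ n) (x : ℕ → Fin (n + 1) → ℝ) (a b : ℝ)
    (hupd : ∀ t : ℕ, ∀ i : Fin (n + 1), ∀ _h1 : 1 ≤ (i : ℕ), ∀ _h2 : (i : ℕ) ≤ n - 1,
      x (t + 1) i =
        (x t ⟨(i : ℕ) - 1, by have := i.isLt; omega⟩ +
         x t ⟨(i : ℕ) + 1, by have := i.isLt; omega⟩) / 2)
    (ha : Tendsto (fun t => x t 0) atTop (nhds a))
    (hb : Tendsto (fun t => x t (Fin.last n)) atTop (nhds b)) :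
    ∀ i : Fin (n + 1),
      Tendsto (fun t => x t i) atTop
        (nhds (a + ((i : ℕ) : ℝ) / (n : ℝ) * (b - a))) := by
  have hn0 : (n : ℝ) ≠ 0 := by
    have : n ≠ 0 := by omega
    exact_mod_cast this
  intro i
  have H := spreading_aux n
    (fun t i => if h : i < n + 1 then x t ⟨i, h⟩ - (a + (i : ℝ) / n * (b - a)) else 0)
    ?_ ?_ ?_ i (by omega)
  · simp only [i.isLt, dif_pos] at H
    simpa using H.add_const (a + ((i : ℕ) : ℝ) / (n : ℝ) * (b - a))
  · intro t j hj
    have e := hupd t ⟨j + 1, by omega⟩ (by simp) (by simp; omega)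
    simp only [Nat.add_sub_cancel] at e
    simp only [show j + 1 < n + 1 by omega, show j < n + 1 by omega,
      show j + 2 < n + 1 by omega, dif_pos]
    rw [e]
    push_cast
    ring
  · have := ha.sub_const a
    simpa using this
  · have := hb.sub_const b
    simpa [hn0, Fin.last] using this
end

section
/- Let m ≥ 2 be an integer and let η : ℕ → Fin (m+1) → ℝ satisfy η (t+1) i = (η t (i−1) + η t (i+1))/2 for every t ≥ 0 and every 1 ≤ i ≤ m−1. Suppose that η t 0 → 0 and η t m → 0 as t → ∞, and that there exists a real M > 0 with |η t i| ≤ M for all t and all 0 ≤ i ≤ m. Then for every 0 ≤ i ≤ m, η t i → 0 as t → ∞. -/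
open Filter Topology

/-- Key convergence lemma (generalized Cohen–Peleg): averaging dynamics with
boundary values tending to `0` and uniformly bounded values converge to `0`
everywhere. -/
theorem averaging_boundary_to_zero
    (m : ℕ) (hm : 2 ≤ m) (η : ℕ → Fin (m + 1) → ℝ)
    (hupd : ∀ t : ℕ, ∀ i : Fin (m + 1), ∀ _h1 : 1 ≤ (i : ℕ), ∀ _h2 : (i : ℕ) ≤ m - 1,
      η (t + 1) i =
        (η t ⟨(i : ℕ) - 1, by have := i.isLt; omega⟩ +
         η t ⟨(i : ℕ) + 1, by have := i.isLt; omega⟩) / 2)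
    (h0 : Tendsto (fun t => η t 0) atTop (nhds 0))
    (hm' : Tendsto (fun t => η t (Fin.last m)) atTop (nhds 0))
    (M : ℝ) (hM : 0 < M)
    (hbd : ∀ t : ℕ, ∀ i : Fin (m + 1), |η t i| ≤ M) :
    ∀ i : Fin (m + 1), Tendsto (fun t => η t i) atTop (nhds 0) := by
  set C : ℝ := 1 + (m : ℝ) ^ 2 with hC
  have hCpos : 1 ≤ C := by rw [hC]; nlinarith [sq_nonneg (m : ℝ)]
  set q : ℝ := 1 - 1 / C with hq
  have hinv : 0 < 1 / C := by positivity
  have hinv1 : 1 / C ≤ 1 := by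
    rw [div_le_one (by linarith)]; exact hCpos
  have hq0 : 0 ≤ q := by linarith
  have hq1 : q < 1 := by linarith
  have key : ∀ ε : ℝ, 0 < ε → ∀ T : ℕ,
      (∀ t, T ≤ t → |η t 0| ≤ ε ∧ |η t (Fin.last m)| ≤ ε) →
      ∀ s : ℕ, ∀ i : Fin (m + 1),
        |η (T + s) i| ≤ ε + M * q ^ s * (1 + (i : ℝ) * ((m : ℝ) - i)) := by
    intro ε hε T hT s
    have hw : ∀ i : Fin (m + 1), 0 ≤ (i : ℝ) * ((m : ℝ) - i) := by
      intro i
      have h : ((i : ℕ) : ℝ) ≤ m := by exact_mod_cast Nat.lt_succ_iff.mp i.isLt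
      exact mul_nonneg (by positivity) (by linarith)
    induction s with
    | zero =>
      intro i
      have := hbd (T + 0) i
      have := mul_nonneg hM.le (hw i)
      simp only [pow_zero]
      linarith
    | succ s ih =>
      intro i
      have hnn : 0 ≤ M * q ^ (s + 1) * (1 + (i : ℝ) * ((m : ℝ) - i)) :=
        mul_nonneg (by positivity) (by linarith [hw i])
      by_cases hi0 : (i : ℕ) = 0
      · have : i = 0 := Fin.ext hi0
        have h := (hT (T + (s + 1)) (by omega)).1
        rw [← this] at h
        linarith
      by_cases him : (i : ℕ) = m
      · have : i = Fin.last m := Fin.ext him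
        have h := (hT (T + (s + 1)) (by omega)).2
        rw [← this] at h
        linarith
      have hlt := i.isLt
      have hu := hupd (T + s) i (by omega) (by omega)
      have ha := ih ⟨(i : ℕ) - 1, by omega⟩
      have hb := ih ⟨(i : ℕ) + 1, by omega⟩
      have hc : (((i : ℕ) - 1 : ℕ) : ℝ) = (i : ℝ) - 1 := by
        rw [Nat.cast_sub (by omega)]; simp
      simp only [hc, Nat.cast_add, Nat.cast_one] at ha hb
      have him' : ((i : ℕ) : ℝ) ≤ m := by exact_mod_cast Nat.lt_succ_iff.mp hlt
      have hi0' : (0 : ℝ) ≤ ((i : ℕ) : ℝ) := by positivity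
      have hwC : 1 + (i : ℝ) * ((m : ℝ) - i) ≤ C := by rw [hC]; nlinarith
      have hstep : (i : ℝ) * ((m : ℝ) - i) ≤ q * (1 + (i : ℝ) * ((m : ℝ) - i)) := by
        have : (1 + (i : ℝ) * ((m : ℝ) - i)) / C ≤ 1 := by
          rw [div_le_one (by linarith)]; exact hwC
        have e : q * (1 + (i : ℝ) * ((m : ℝ) - i)) = (1 + (i : ℝ) * ((m : ℝ) - i)) -
          (1 + (i : ℝ) * ((m : ℝ) - i)) / C := by rw [hq]; ring
        linarith
      have hmul := mul_le_mul_of_nonneg_left hstep (by positivity : 0 ≤ M * q ^ s)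
      rw [show T + (s + 1) = T + s + 1 from rfl, hu, abs_div, abs_two, div_le_iff₀ (by norm_num)]
      refine (abs_add_le _ _).trans ((add_le_add ha hb).trans ?_)
      rw [pow_succ]
      linarith
  intro i
  rw [Metric.tendsto_atTop]
  intro ε hε
  obtain ⟨T0, hT0⟩ := (Metric.tendsto_atTop.mp h0) (ε / 2) (by linarith)
  obtain ⟨T1, hT1⟩ := (Metric.tendsto_atTop.mp hm') (ε / 2) (by linarith)
  have hk := key (ε / 2) (by linarith) (max T0 T1) (by
    intro t ht
    have a := hT0 t (le_trans (le_max_left _ _) ht)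
    have b := hT1 t (le_trans (le_max_right _ _) ht)
    rw [Real.dist_eq, sub_zero] at a b
    exact ⟨a.le, b.le⟩)
  have hlim : Tendsto (fun s : ℕ => M * q ^ s * (1 + (i : ℝ) * ((m : ℝ) - i))) atTop (nhds 0) := by
    have := ((tendsto_pow_atTop_nhds_zero_of_lt_one hq0 hq1).const_mul M).mul_const
      (1 + (i : ℝ) * ((m : ℝ) - i))
    simpa using this
  obtain ⟨S, hS⟩ := (hlim.eventually (gt_mem_nhds (by linarith : (0 : ℝ) < ε / 2))).exists_forall_of_atTop
  refine ⟨max T0 T1 + S, fun t ht => ?_⟩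
  obtain ⟨s, rfl⟩ := Nat.exists_eq_add_of_le (le_trans (Nat.le_add_right _ _) ht)
  have h1 := hk s i
  have h2 := hS s (by omega)
  rw [Real.dist_eq, sub_zero]
  linarith
end

section
/- Let j ≥ 1 be an integer and let s : ℕ → ℤ → ℝ satisfy: s t i ≥ 0 for all t and i; s t i = 0 whenever i ≤ 0 or i ≥ j+1; there exists a real C > 0 with s t i ≤ C for all t and i; and s (t+1) i ≤ (s t (i−1) + s t (i+1))/2 for every t ≥ 0 and every 1 ≤ i ≤ j. Then for every i, s t i → 0 as t → ∞. -/
open Filter Topology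

/-- A nonnegative, uniformly bounded double sequence vanishing outside the
window `1 ≤ i ≤ j` and sub-harmonic in time tends to `0` everywhere. -/
theorem subharmonic_window_to_zero
    (j : ℕ) (hj : 1 ≤ j) (s : ℕ → ℤ → ℝ)
    (hnonneg : ∀ t : ℕ, ∀ i : ℤ, 0 ≤ s t i)
    (hzero : ∀ t : ℕ, ∀ i : ℤ, (i ≤ 0 ∨ (j : ℤ) + 1 ≤ i) → s t i = 0)
    (C : ℝ) (hC : 0 < C)
    (hbd : ∀ t : ℕ, ∀ i : ℤ, s t i ≤ C)
    (hupd : ∀ t : ℕ, ∀ i : ℤ, 1 ≤ i → i ≤ (j : ℤ) →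
      s (t + 1) i ≤ (s t (i - 1) + s t (i + 1)) / 2) :
    ∀ i : ℤ, Tendsto (fun t => s t i) atTop (nhds 0) := by
  have hjR : (1 : ℝ) ≤ j := by exact_mod_cast hj
  obtain ⟨r, hr⟩ : ∃ r : ℝ, r = 1 - 1 / ((j : ℝ) + 1) ^ 2 := ⟨_, rfl⟩
  have hNpos : (0 : ℝ) < ((j : ℝ) + 1) ^ 2 := by positivity
  have hr1 : r < 1 := by
    have : 0 < 1 / ((j : ℝ) + 1) ^ 2 := by positivity
    linarith
  have hr0 : 0 ≤ r := by
    have : 1 / ((j : ℝ) + 1) ^ 2 ≤ 1 := by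
      rw [div_le_one hNpos]
      nlinarith
    linarith
  have key : ∀ t : ℕ, ∀ i : ℤ, 0 ≤ i → i ≤ (j : ℤ) + 1 →
      s t i ≤ C * r ^ t * ((i : ℝ) * ((j : ℝ) + 1 - i)) := by
    intro t
    induction t with
    | zero =>
      intro i h0 h1
      by_cases hi : i ≤ 0 ∨ (j : ℤ) + 1 ≤ i
      · rw [hzero 0 i hi]
        have a : (0 : ℝ) ≤ i := by exact_mod_cast h0
        have b : (i : ℝ) ≤ j + 1 := by exact_mod_cast h1
        have := mul_nonneg a (sub_nonneg.2 b)
        positivity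
      · push Not at hi
        have a : (1 : ℝ) ≤ i := by exact_mod_cast hi.1
        have b : (i : ℝ) ≤ j := by
          have : i ≤ (j : ℤ) := by omega
          exact_mod_cast this
        have hh : 1 ≤ (i : ℝ) * ((j : ℝ) + 1 - i) := by
          nlinarith [mul_nonneg (sub_nonneg.2 a) (sub_nonneg.2 b)]
        have := hbd 0 i
        rw [pow_zero, mul_one]
        nlinarith
    | succ t ih =>
      intro i h0 h1
      have a : (0 : ℝ) ≤ i := by exact_mod_cast h0
      have b : (i : ℝ) ≤ j + 1 := by exact_mod_cast h1
      have hp := mul_nonneg a (sub_nonneg.2 b)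
      have hK : 0 ≤ C * r ^ t := by positivity
      by_cases hi : i ≤ 0 ∨ (j : ℤ) + 1 ≤ i
      · rw [hzero _ i hi]
        positivity
      · push Not at hi
        have u := hupd t i (by omega) (by omega)
        have u1 := ih (i - 1) (by omega) (by omega)
        have u2 := ih (i + 1) (by omega) (by omega)
        push_cast at u1 u2
        have hle : (i : ℝ) * ((j : ℝ) + 1 - i) - 1 ≤ r * ((i : ℝ) * ((j : ℝ) + 1 - i)) := by
          have : (i : ℝ) * ((j : ℝ) + 1 - i) / ((j : ℝ) + 1) ^ 2 ≤ 1 := by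
            rw [div_le_one hNpos]
            nlinarith
          rw [hr]
          have e : (1 - 1 / ((j : ℝ) + 1) ^ 2) * ((i : ℝ) * ((j : ℝ) + 1 - i))
            = (i : ℝ) * ((j : ℝ) + 1 - i) - (i : ℝ) * ((j : ℝ) + 1 - i) / ((j : ℝ) + 1) ^ 2 := by
            ring
          linarith
        have := mul_le_mul_of_nonneg_left hle hK
        rw [pow_succ]
        linarith
  intro i
  by_cases hi : i ≤ 0 ∨ (j : ℤ) + 1 ≤ i
  · simp [hzero _ i hi]
  · push Not at hi
    refine squeeze_zero (fun t => hnonneg t i) (fun t => key t i (by omega) (by omega)) ?_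
    have := ((tendsto_pow_atTop_nhds_zero_of_lt_one hr0 hr1).const_mul C).mul_const
      ((i : ℝ) * ((j : ℝ) + 1 - i))
    simpa using this
end

section
/- Let j ≥ 1 be an integer and let s : ℕ → ℤ → ℝ satisfy: s t i ≥ 0 for all t and i; s t i = 0 whenever i ≤ 0 or i ≥ j+1; and s (t+1) i ≤ (s t (i−1) + s t (i+1))/2 for every t ≥ 0 and every 1 ≤ i ≤ j. Then for every t ≥ 0 and every i ∈ ℤ, s t i ≤ (1/2^t) · Σ_{k=0}^{t} C(t,k) · s 0 (i − t + 2k), where C(t,k) denotes the binomial coefficient. -/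
open Filter Topology

theorem pascal_sum_aux (t : ℕ) (f : ℕ → ℝ) :
    ∑ k ∈ Finset.range (t + 1 + 1), (Nat.choose (t + 1) k : ℝ) * f k =
      ∑ k ∈ Finset.range (t + 1), (Nat.choose t k : ℝ) * f k +
      ∑ k ∈ Finset.range (t + 1), (Nat.choose t k : ℝ) * f (k + 1) := by
  have h : ∑ k ∈ Finset.range (t + 1), (Nat.choose t k : ℝ) * f k =
      ∑ k ∈ Finset.range (t + 1 + 1), (Nat.choose t k : ℝ) * f k := by
    rw [Finset.sum_range_succ _ (t + 1)]
    simp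
  rw [h, Finset.sum_range_succ', Finset.sum_range_succ' _ (t + 1)]
  simp only [Nat.choose_succ_succ, Nat.cast_add, add_mul, Finset.sum_add_distrib,
    Nat.choose_zero_right, Nat.succ_eq_add_one]
  ring

/-- Binomial smoothing bound for a nonnegative double sequence vanishing
outside the window `1 ≤ i ≤ j` and sub-harmonic in time. -/
theorem subharmonic_binomial_bound
    (j : ℕ) (hj : 1 ≤ j) (s : ℕ → ℤ → ℝ)
    (hnonneg : ∀ t : ℕ, ∀ i : ℤ, 0 ≤ s t i)
    (hzero : ∀ t : ℕ, ∀ i : ℤ, (i ≤ 0 ∨ (j : ℤ) + 1 ≤ i) → s t i = 0)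
    (hupd : ∀ t : ℕ, ∀ i : ℤ, 1 ≤ i → i ≤ (j : ℤ) →
      s (t + 1) i ≤ (s t (i - 1) + s t (i + 1)) / 2) :
    ∀ t : ℕ, ∀ i : ℤ,
      s t i ≤ (1 / 2 ^ t) *
        ∑ k ∈ Finset.range (t + 1),
          (Nat.choose t k : ℝ) * s 0 (i - (t : ℤ) + 2 * (k : ℤ)) := by
  have hstep : ∀ t : ℕ, ∀ i : ℤ, s (t + 1) i ≤ (s t (i - 1) + s t (i + 1)) / 2 := by
    intro t i
    by_cases h : 1 ≤ i ∧ i ≤ (j : ℤ)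
    · exact hupd t i h.1 h.2
    · rw [hzero (t + 1) i (by omega)]
      have h1 := hnonneg t (i - 1)
      have h2 := hnonneg t (i + 1)
      linarith
  intro t
  induction t with
  | zero => intro i; simp
  | succ t ih =>
    intro i
    have e := pascal_sum_aux t (fun k => s 0 (i - ((t + 1 : ℕ) : ℤ) + 2 * (k : ℤ)))
    rw [e]
    have h1 := ih (i - 1)
    have h2 := ih (i + 1)
    have h3 := hstep t i
    have e1 : ∀ k : ℕ, i - ((t + 1 : ℕ) : ℤ) + 2 * (k : ℤ) = i - 1 - (t : ℤ) + 2 * (k : ℤ) := by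
      intro k; push_cast; ring
    have e2 : ∀ k : ℕ, i - ((t + 1 : ℕ) : ℤ) + 2 * ((k + 1 : ℕ) : ℤ)
        = i + 1 - (t : ℤ) + 2 * (k : ℤ) := by
      intro k; push_cast; ring
    simp only [e2]
    simp only [e1]
    have e3 : (1 : ℝ) / 2 ^ (t + 1) = 1 / 2 ^ t / 2 := by
      rw [pow_succ, div_div]
    rw [e3]
    linarith
end

section
/- (No Crossing) In the robot model on a line, if i and j are non-faulty robots (i ≠ 0, i ≠ n, j ≠ 0, j ≠ n) and x t i < x t j at some time t, then x (t+1) i ≤ x (t+1) j. -/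
open Filter Topology

/-- Position of the farthest left robot visible from robot `i` at time `t`
(visibility radius `V`). -/
noncomputable def lpos {n : ℕ} (V : ℝ) (x : ℕ → Fin (n + 1) → ℝ)
    (t : ℕ) (i : Fin (n + 1)) : ℝ :=
  sInf (x t '' {j | |x t j - x t i| ≤ V})

/-- Position of the farthest right robot visible from robot `i` at time `t`
(visibility radius `V`). -/
noncomputable def rpos {n : ℕ} (V : ℝ) (x : ℕ → Fin (n + 1) → ℝ)
    (t : ℕ) (i : Fin (n + 1)) : ℝ :=
  sSup (x t '' {j | |x t j - x t i| ≤ V})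

/-- (No Crossing) Two non-faulty robots never cross in one step. -/
theorem no_crossing
    (n : ℕ) (hn : 2 ≤ n) (V D : ℝ) (hV : 0 < V) (hD : 0 < D)
    (x : ℕ → Fin (n + 1) → ℝ)
    (hfault0 : ∀ t : ℕ, x t 0 = 0)
    (hfaultn : ∀ t : ℕ, x t (Fin.last n) = D)
    (hupd : ∀ t : ℕ, ∀ i : Fin (n + 1), i ≠ 0 → i ≠ Fin.last n →
      x (t + 1) i = (lpos V x t i + rpos V x t i) / 2)
    (i j : Fin (n + 1)) (hi0 : i ≠ 0) (hin : i ≠ Fin.last n)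
    (hj0 : j ≠ 0) (hjn : j ≠ Fin.last n)
    (t : ℕ) (hlt : x t i < x t j) :
    x (t + 1) i ≤ x (t + 1) j := by
  rw [hupd t i hi0 hin, hupd t j hj0 hjn]
  have hl : lpos V x t i ≤ lpos V x t j := by
    unfold lpos
    refine le_csInf ⟨x t j, j, by simp [hV.le], rfl⟩ ?_
    rintro _ ⟨k, hk, rfl⟩
    obtain ⟨h1, h2⟩ := abs_le.1 (show |x t k - x t j| ≤ V from hk)
    have hb : BddBelow (x t '' {k | |x t k - x t i| ≤ V}) := (Set.toFinite _).bddBelow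
    rcases le_total (x t i) (x t k) with h | h
    · exact (csInf_le hb ⟨i, by simp [hV.le], rfl⟩).trans h
    · exact csInf_le hb ⟨k, show |x t k - x t i| ≤ V from abs_le.2 ⟨by linarith, by linarith⟩, rfl⟩
  have hr : rpos V x t i ≤ rpos V x t j := by
    unfold rpos
    refine csSup_le ⟨x t i, i, by simp [hV.le], rfl⟩ ?_
    rintro _ ⟨k, hk, rfl⟩
    obtain ⟨h1, h2⟩ := abs_le.1 (show |x t k - x t i| ≤ V from hk)
    have hb : BddAbove (x t '' {k | |x t k - x t j| ≤ V}) := (Set.toFinite _).bddAbove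
    rcases le_total (x t k) (x t j) with h | h
    · exact h.trans (le_csSup hb ⟨j, by simp [hV.le], rfl⟩)
    · exact le_csSup hb ⟨k, show |x t k - x t j| ≤ V from abs_le.2 ⟨by linarith, by linarith⟩, rfl⟩
  linarith
end

section
/- (Preserved Visibility) In the robot model on a line, if robots i and j satisfy |x t i − x t j| ≤ V at some time t (i.e., j ∈ N(i,t)), then |x (t+1) i − x (t+1) j| ≤ V (i.e., j ∈ N(i,t+1)). Consequently, by induction, j ∈ N(i,t') for every t' ≥ t. -/
open Filter Topology

theorem lr_bounds {n : ℕ} (V : ℝ) (hV : 0 < V) (x : ℕ → Fin (n + 1) → ℝ)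
    (t : ℕ) (k m : Fin (n + 1)) (h : |x t m - x t k| ≤ V) :
    x t k - V ≤ lpos V x t k ∧ lpos V x t k ≤ x t m ∧
      x t m ≤ rpos V x t k ∧ rpos V x t k ≤ x t k + V := by
  have hfin : (x t '' {j | |x t j - x t k| ≤ V}).Finite := Set.toFinite _
  have hmem : x t m ∈ x t '' {j | |x t j - x t k| ≤ V} := ⟨m, h, rfl⟩
  refine ⟨le_csInf ⟨_, hmem⟩ ?_, csInf_le hfin.bddBelow hmem,
    le_csSup hfin.bddAbove hmem, csSup_le ⟨_, hmem⟩ ?_⟩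
  · rintro _ ⟨j, hj, rfl⟩
    have := abs_le.mp (show |x t j - x t k| ≤ V from hj)
    linarith [this.1]
  · rintro _ ⟨j, hj, rfl⟩
    have := abs_le.mp (show |x t j - x t k| ≤ V from hj)
    linarith [this.2]

/-- (Preserved Visibility) A robot never loses visibility of a robot it has
seen in the past. -/
theorem preserved_visibility
    (n : ℕ) (hn : 2 ≤ n) (V D : ℝ) (hV : 0 < V) (hD : 0 < D)
    (x : ℕ → Fin (n + 1) → ℝ)
    (hfault0 : ∀ t : ℕ, x t 0 = 0)
    (hfaultn : ∀ t : ℕ, x t (Fin.last n) = D)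
    (hupd : ∀ t : ℕ, ∀ i : Fin (n + 1), i ≠ 0 → i ≠ Fin.last n →
      x (t + 1) i = (lpos V x t i + rpos V x t i) / 2)
    (i j : Fin (n + 1)) (t : ℕ) (hvis : |x t i - x t j| ≤ V) :
    ∀ t' : ℕ, t ≤ t' → |x t' i - x t' j| ≤ V := by
  have hstep : ∀ s k, x (s + 1) k = x s k ∨
      x (s + 1) k = (lpos V x s k + rpos V x s k) / 2 := by
    intro s k
    by_cases h0 : k = 0
    · left; rw [h0, hfault0, hfault0]
    by_cases h1 : k = Fin.last n
    · left; rw [h1, hfaultn, hfaultn]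
    exact Or.inr (hupd s k h0 h1)
  intro t' ht
  induction t', ht using Nat.le_induction with
  | base => exact hvis
  | succ s hs ih =>
    have hself : ∀ k, |x s k - x s k| ≤ V := fun k => by simpa using hV.le
    obtain ⟨a1, a2, a3, a4⟩ := lr_bounds V hV x s i i (hself i)
    obtain ⟨b1, b2, b3, b4⟩ := lr_bounds V hV x s j j (hself j)
    obtain ⟨-, c2, c3, -⟩ := lr_bounds V hV x s j i ih
    obtain ⟨-, d2, d3, -⟩ := lr_bounds V hV x s i j (by rwa [abs_sub_comm])
    have hv := abs_le.mp ih
    obtain ⟨v1, v2⟩ := hv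
    rw [abs_le]
    rcases hstep s i with h | h <;> rcases hstep s j with h' | h' <;> rw [h, h'] <;>
      constructor <;> linarith
end

section
/- In the robot model on a line, let ℓ be a non-faulty robot that is leftmost among non-faulty robots at time t₀, i.e., x t₀ ℓ ≤ x t₀ i for every non-faulty robot i. If 0 ≤ x t₀ ℓ ≤ D, then x t ℓ ≥ 0 for every t ≥ t₀; that is, once the leftmost non-faulty robot is inside the segment [0,D] delimited by the two faulty robots, it never again moves to the left of 0. -/
open Filter Topology

/-- Once the leftmost non-faulty robot is inside the segment `[0, D]`, it
never again moves to the left of `0`. -/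
theorem leftmost_stays_right_of_zero
    (n : ℕ) (hn : 2 ≤ n) (V D : ℝ) (hV : 0 < V) (hD : 0 < D)
    (x : ℕ → Fin (n + 1) → ℝ)
    (hfault0 : ∀ t : ℕ, x t 0 = 0)
    (hfaultn : ∀ t : ℕ, x t (Fin.last n) = D)
    (hupd : ∀ t : ℕ, ∀ i : Fin (n + 1), i ≠ 0 → i ≠ Fin.last n →
      x (t + 1) i = (lpos V x t i + rpos V x t i) / 2)
    (ℓ : Fin (n + 1)) (hℓ0 : ℓ ≠ 0) (hℓn : ℓ ≠ Fin.last n) (t₀ : ℕ)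
    (hleftmost : ∀ i : Fin (n + 1), i ≠ 0 → i ≠ Fin.last n → x t₀ ℓ ≤ x t₀ i)
    (hin : 0 ≤ x t₀ ℓ ∧ x t₀ ℓ ≤ D) :
    ∀ t : ℕ, t₀ ≤ t → 0 ≤ x t ℓ := by
  have key : ∀ t : ℕ, t₀ ≤ t → ∀ i, 0 ≤ x t i := by
    intro t ht
    induction t, ht using Nat.le_induction with
    | base =>
      intro i
      by_cases h0 : i = 0
      · rw [h0, hfault0]
      by_cases h1 : i = Fin.last n
      · rw [h1, hfaultn]; exact hD.le
      exact hin.1.trans (hleftmost i h0 h1)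
    | succ t ht ih =>
      intro i
      by_cases h0 : i = 0
      · rw [h0, hfault0]
      by_cases h1 : i = Fin.last n
      · rw [h1, hfaultn]; exact hD.le
      rw [hupd t i h0 h1]
      have hl : 0 ≤ lpos V x t i := by
        apply Real.sInf_nonneg
        rintro _ ⟨j, -, rfl⟩
        exact ih j
      have hr : 0 ≤ rpos V x t i := by
        apply Real.sSup_nonneg
        rintro _ ⟨j, -, rfl⟩
        exact ih j
      linarith
  exact fun t ht => key t ht ℓ
end

section
/- In the robot model on a line, assume the visibility graph at time 0 is connected. Let ℓ be a non-faulty robot that is leftmost among non-faulty robots at time 0, i.e., x 0 ℓ ≤ x 0 i for every non-faulty robot i, and suppose x t ℓ < 0 for every time t (ℓ never enters the segment [0,D]). Then the sequence t ↦ x t ℓ is strictly increasing and x t ℓ → 0 as t → ∞; that is, a robot that perpetually stays to the left of the segment converges to the left faulty robot. -/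
open Filter Topology

section helpers
variable {n : ℕ} {V : ℝ} {x : ℕ → Fin (n + 1) → ℝ} {t : ℕ}

lemma lpos_le {i j : Fin (n + 1)} (h : |x t j - x t i| ≤ V) : lpos V x t i ≤ x t j :=
  csInf_le ((Set.toFinite _).bddBelow) ⟨j, h, rfl⟩

lemma le_rpos {i j : Fin (n + 1)} (h : |x t j - x t i| ≤ V) : x t j ≤ rpos V x t i :=
  le_csSup ((Set.toFinite _).bddAbove) ⟨j, h, rfl⟩

lemma le_lpos (hV : 0 < V) {i : Fin (n + 1)} {c : ℝ}
    (h : ∀ j, |x t j - x t i| ≤ V → c ≤ x t j) : c ≤ lpos V x t i := by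
  refine le_csInf (Set.Nonempty.image _ ⟨i, by simpa using hV.le⟩) ?_
  rintro _ ⟨j, hj, rfl⟩
  exact h j hj

lemma rpos_le (hV : 0 < V) {i : Fin (n + 1)} {c : ℝ}
    (h : ∀ j, |x t j - x t i| ≤ V → x t j ≤ c) : rpos V x t i ≤ c := by
  refine csSup_le (Set.Nonempty.image _ ⟨i, by simpa using hV.le⟩) ?_
  rintro _ ⟨j, hj, rfl⟩
  exact h j hj

lemma self_vis (hV : 0 < V) (i : Fin (n + 1)) : |x t i - x t i| ≤ V := by
  simpa using hV.le

lemma lpos_mono (hV : 0 < V) {i j : Fin (n + 1)} (h : x t i ≤ x t j) :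
    lpos V x t i ≤ lpos V x t j := by
  apply le_lpos hV
  intro k hk
  rw [abs_le] at hk
  rcases le_total (x t i) (x t k) with h1 | h1
  · exact (lpos_le (self_vis hV i)).trans h1
  · apply lpos_le
    rw [abs_le]; constructor <;> linarith

lemma rpos_mono (hV : 0 < V) {i j : Fin (n + 1)} (h : x t i ≤ x t j) :
    rpos V x t i ≤ rpos V x t j := by
  apply rpos_le hV
  intro k hk
  rw [abs_le] at hk
  rcases le_total (x t k) (x t j) with h1 | h1
  · exact h1.trans (le_rpos (self_vis hV j))
  · apply le_rpos
    rw [abs_le]; constructor <;> linarith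

lemma bounds (hV : 0 < V) (i : Fin (n + 1)) :
    x t i - V ≤ lpos V x t i ∧ lpos V x t i ≤ x t i ∧ x t i ≤ rpos V x t i ∧
      rpos V x t i ≤ x t i + V := by
  refine ⟨le_lpos hV ?_, lpos_le (self_vis hV i), le_rpos (self_vis hV i), rpos_le hV ?_⟩ <;>
  · intro j hj
    rw [abs_le] at hj
    linarith

/-- One-step estimates shared by faulty and non-faulty robots. -/
lemma step_bounds (hV : 0 < V) {i j : Fin (n + 1)} (h : |x t i - x t j| ≤ V)
    (hle : x t i ≤ x t j)
    (hi : x (t + 1) i = x t i ∨ x (t + 1) i = (lpos V x t i + rpos V x t i) / 2)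
    (hj : x (t + 1) j = x t j ∨ x (t + 1) j = (lpos V x t j + rpos V x t j) / 2) :
    |x (t + 1) i - x (t + 1) j| ≤ V := by
  have h' : |x t j - x t i| ≤ V := by rwa [abs_sub_comm]
  have a1 := le_rpos h'
  have a2 := lpos_le h
  obtain ⟨b1, b2, b3, b4⟩ := bounds (x := x) (t := t) hV i
  obtain ⟨c1, c2, c3, c4⟩ := bounds (x := x) (t := t) hV j
  rw [abs_le] at h ⊢
  rcases hi with hi | hi <;> rcases hj with hj | hj <;> rw [hi, hj] <;> constructor <;> linarith

lemma exists_exit {α : Type*} {R : α → α → Prop} {S : α → Prop} {a b : α}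
    (h : Relation.ReflTransGen R a b) (ha : S a) (hb : ¬ S b) :
    ∃ c d, S c ∧ ¬ S d ∧ R c d := by
  by_contra! hc
  apply hb
  clear hb
  induction h with
  | refl => exact ha
  | tail _ h2 ih =>
    by_contra hd
    exact hc _ _ ih hd h2

end helpers

/-- A leftmost non-faulty robot that perpetually stays to the left of the
segment `[0, D]` moves strictly monotonically and converges to the left
faulty robot. -/
theorem perpetual_outsider_converges
    (n : ℕ) (hn : 2 ≤ n) (V D : ℝ) (hV : 0 < V) (hD : 0 < D)
    (x : ℕ → Fin (n + 1) → ℝ)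
    (hfault0 : ∀ t : ℕ, x t 0 = 0)
    (hfaultn : ∀ t : ℕ, x t (Fin.last n) = D)
    (hupd : ∀ t : ℕ, ∀ i : Fin (n + 1), i ≠ 0 → i ≠ Fin.last n →
      x (t + 1) i = (lpos V x t i + rpos V x t i) / 2)
    (hconn : ∀ i j : Fin (n + 1),
      Relation.ReflTransGen (fun a b : Fin (n + 1) => |x 0 a - x 0 b| ≤ V) i j)
    (ℓ : Fin (n + 1)) (hℓ0 : ℓ ≠ 0) (hℓn : ℓ ≠ Fin.last n)
    (hleftmost : ∀ i : Fin (n + 1), i ≠ 0 → i ≠ Fin.last n → x 0 ℓ ≤ x 0 i)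
    (hout : ∀ t : ℕ, x t ℓ < 0) :
    StrictMono (fun t => x t ℓ) ∧
      Tendsto (fun t => x t ℓ) atTop (nhds 0) := by
  have hstep : ∀ t i, x (t + 1) i = x t i ∨
      x (t + 1) i = (lpos V x t i + rpos V x t i) / 2 := by
    intro t i
    by_cases h0 : i = 0
    · left; rw [h0, hfault0, hfault0]
    by_cases h1 : i = Fin.last n
    · left; rw [h1, hfaultn, hfaultn]
    exact Or.inr (hupd t i h0 h1)
  have hedge : ∀ t i j, |x t i - x t j| ≤ V → |x (t + 1) i - x (t + 1) j| ≤ V := by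
    intro t i j h
    rcases le_total (x t i) (x t j) with hle | hle
    · exact step_bounds hV h hle (hstep t i) (hstep t j)
    · rw [abs_sub_comm] at h ⊢
      exact step_bounds hV h hle (hstep t j) (hstep t i)
  have hedge0 : ∀ t i j, |x 0 i - x 0 j| ≤ V → |x t i - x t j| ≤ V := by
    intro t i j h
    induction t with
    | zero => exact h
    | succ t ih => exact hedge t i j ih
  have hleft : ∀ t i, i ≠ 0 → i ≠ Fin.last n → x t ℓ ≤ x t i := by
    intro t i h0 h1
    induction t with
    | zero => exact hleftmost i h0 h1
    | succ t ih =>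
      rw [hupd t i h0 h1, hupd t ℓ hℓ0 hℓn]
      linarith [lpos_mono hV ih, rpos_mono hV ih]
  have hall : ∀ t i, x t ℓ ≤ x t i := by
    intro t i
    by_cases h0 : i = 0
    · rw [h0, hfault0]; exact (hout t).le
    by_cases h1 : i = Fin.last n
    · rw [h1, hfaultn]; linarith [hout t]
    exact hleft t i h0 h1
  have hl : ∀ t, lpos V x t ℓ = x t ℓ := fun t =>
    le_antisymm (lpos_le (self_vis hV ℓ)) (le_lpos hV fun j _ => hall t j)
  have hrec : ∀ t, x (t + 1) ℓ = (x t ℓ + rpos V x t ℓ) / 2 := by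
    intro t
    rw [hupd t ℓ hℓ0 hℓn, hl]
  have hexit : ∀ t (S : Fin (n + 1) → Prop), S ℓ → ¬ S 0 →
      ∃ a b, S a ∧ ¬ S b ∧ |x t a - x t b| ≤ V := by
    intro t S h1 h2
    obtain ⟨a, b, ha, hb, hab⟩ := exists_exit (hconn ℓ 0) h1 h2
    exact ⟨a, b, ha, hb, hedge0 t a b hab⟩
  have hmono : StrictMono (fun t => x t ℓ) := by
    apply strictMono_nat_of_lt_succ
    intro t
    obtain ⟨a, b, ha, hb, hab⟩ := hexit t (fun j => x t j ≤ x t ℓ) le_rfl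
      (by rw [hfault0]; exact not_le.mpr (hout t))
    have hae : x t a = x t ℓ := le_antisymm ha (hall t a)
    rw [hae, abs_sub_comm] at hab
    have := le_rpos hab
    have := hrec t
    have hb' := not_le.mp hb
    show x t ℓ < x (t + 1) ℓ
    linarith
  refine ⟨hmono, ?_⟩
  have hbdd : BddAbove (Set.range fun t => x t ℓ) := by
    refine ⟨0, ?_⟩
    rintro _ ⟨t, rfl⟩
    exact (hout t).le
  have hlim := tendsto_atTop_ciSup hmono.monotone hbdd
  set L := ⨆ t, x t ℓ with hL
  have hL0 : L ≤ 0 := le_of_tendsto' hlim fun t => (hout t).le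
  rcases hL0.eq_or_lt with h | hneg
  · rwa [h] at hlim
  exfalso
  have h1 : Tendsto (fun t => x (t + 1) ℓ) atTop (𝓝 L) := hlim.comp (tendsto_add_atTop_nat 1)
  have h2 : Tendsto (fun t => x (t + 1 + 1) ℓ) atTop (𝓝 L) := h1.comp (tendsto_add_atTop_nat 1)
  have e1 : ∀ᶠ t in atTop, 2 * x (t + 1) ℓ - x t ℓ < 0 := by
    have := (h1.const_mul 2).sub hlim
    exact this.eventually_lt_const (by linarith)
  have e2 : ∀ᶠ t in atTop, 2 * x (t + 1 + 1) ℓ - x (t + 1) ℓ - x t ℓ < V / 2 := by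
    have := ((h2.const_mul 2).sub h1).sub hlim
    exact this.eventually_lt_const (by linarith)
  obtain ⟨t, ht1, ht2⟩ := (e1.and e2).exists
  have r1 := hrec t
  have r2 := hrec (t + 1)
  obtain ⟨a, b, ha, hb, hab⟩ := hexit t (fun j => |x t j - x t ℓ| ≤ V) (self_vis hV ℓ)
    (by
      intro h
      have := le_rpos h
      rw [hfault0] at this
      linarith)
  have hra := le_rpos ha
  have ha0 : a ≠ 0 := by
    rintro rfl
    rw [hfault0] at hra
    linarith
  have han : a ≠ Fin.last n := by
    rintro rfl
    rw [hfaultn] at hra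
    linarith
  have hb' : x t ℓ + V < x t b := by
    have h3 := not_le.mp hb
    rw [abs_of_nonneg (by linarith [hall t b])] at h3
    linarith
  have h4 : x t ℓ ≤ lpos V x t a := le_lpos hV fun j _ => hall t j
  rw [abs_sub_comm] at hab
  have h5 := le_rpos hab
  have h6 := hupd t a ha0 han
  have h7 := le_rpos (hedge t a ℓ ha)
  linarith
end

section
/- (No More Crossing) In the robot model on a line, assume the visibility graph at time 0 is connected. Then every non-faulty robot i crosses each faulty robot only finitely many times: the set of times { t : (x t i < 0) ≠ (x (t+1) i < 0) } is finite, and the set of times { t : (x t i > D) ≠ (x (t+1) i > D) } is finite. -/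
open Filter Topology

/-- One-sided version, over an arbitrary finite index type, with faulty robots `a` (at 0), `b`. -/
theorem nmc_aux {ι : Type*} [Finite ι] (a b : ι) (V D : ℝ) (hV : 0 < V) (hD : 0 < D)
    (x : ℕ → ι → ℝ) (ha : ∀ t, x t a = 0) (hb : ∀ t, x t b = D)
    (hu : ∀ t i, i ≠ a → i ≠ b → ∃ p q, |x t p - x t i| ≤ V ∧ |x t q - x t i| ≤ V ∧
      (∀ j, |x t j - x t i| ≤ V → x t p ≤ x t j ∧ x t j ≤ x t q) ∧
      x (t + 1) i = (x t p + x t q) / 2)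
    (hc : ∀ i j, Relation.ReflTransGen (fun a b => |x 0 a - x 0 b| ≤ V) i j)
    (i : ι) (hia : i ≠ a) (hib : i ≠ b) :
    ∃ T, ∀ t, T ≤ t → (x t i < 0 ↔ x (t + 1) i < 0) := by
  -- order preservation
  have hord1 : ∀ t i j, i ≠ a → i ≠ b → j ≠ a → j ≠ b → x t i ≤ x t j →
      x (t + 1) i ≤ x (t + 1) j := by
    intro t i j h1 h2 h3 h4 hij
    obtain ⟨p, q, hp, hq, hm, he⟩ := hu t i h1 h2
    obtain ⟨p', q', hp', hq', hm', he'⟩ := hu t j h3 h4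
    rw [abs_le] at hp hq hp' hq'
    have e1 : x t p ≤ x t p' := by
      by_cases h : x t p' ≤ x t i + V
      · exact (hm p' (abs_le.2 ⟨by linarith, by linarith⟩)).1
      · have := (hm i (by simpa using hV.le)).1
        linarith
    have e2 : x t q ≤ x t q' := by
      by_cases h : x t j - V ≤ x t q
      · exact (hm' q (abs_le.2 ⟨by linarith, by linarith⟩)).2
      · have := (hm' j (by simpa using hV.le)).2
        linarith
    rw [he, he']; linarith
  -- faulty positions are constant
  have hf : ∀ t i, (i = a ∨ i = b) → x (t + 1) i = x t i := by
    rintro t i (rfl | rfl)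
    · rw [ha, ha]
    · rw [hb, hb]
  -- edge preservation (ordered)
  have hedge0 : ∀ t i j, x t i ≤ x t j → x t j - x t i ≤ V → |x (t + 1) i - x (t + 1) j| ≤ V := by
    intro t i j hij hd
    have hji : |x t j - x t i| ≤ V := abs_le.2 ⟨by linarith, hd⟩
    have hij' : |x t i - x t j| ≤ V := abs_le.2 ⟨by linarith, by linarith⟩
    by_cases h1 : i = a ∨ i = b
    · by_cases h2 : j = a ∨ j = b
      · rw [hf t i h1, hf t j h2]; exact hij'
      · push Not at h2
        obtain ⟨p, q, hp, hq, hm, he⟩ := hu t j h2.1 h2.2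
        have m1 := hm i hij'
        have m2 := hm j (by simpa using hV.le)
        rw [abs_le] at hp hq
        rw [hf t i h1, he, abs_le]
        constructor <;> linarith
    · push Not at h1
      obtain ⟨p, q, hp, hq, hm, he⟩ := hu t i h1.1 h1.2
      have m1 := hm j hji
      have m2 := hm i (by simpa using hV.le)
      rw [abs_le] at hp hq
      by_cases h2 : j = a ∨ j = b
      · rw [hf t j h2, he, abs_le]
        constructor <;> linarith
      · push Not at h2
        obtain ⟨p', q', hp', hq', hm', he'⟩ := hu t j h2.1 h2.2
        have m1' := hm' i hij'
        have m2' := hm' j (by simpa using hV.le)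
        rw [abs_le] at hp' hq'
        rw [he, he', abs_le]
        constructor <;> linarith
  have hedge1 : ∀ t i j, |x t i - x t j| ≤ V → |x (t + 1) i - x (t + 1) j| ≤ V := by
    intro t i j h
    rw [abs_le] at h
    rcases le_total (x t i) (x t j) with h' | h'
    · exact hedge0 t i j h' (by linarith)
    · rw [abs_sub_comm]; exact hedge0 t j i h' (by linarith)
  have hedge : ∀ t s i j, t ≤ s → |x t i - x t j| ≤ V → |x s i - x s j| ≤ V := by
    intro t s i j hts h
    induction s, hts using Nat.le_induction with
    | base => exact h
    | succ s _ ih => exact hedge1 s i j ih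
  -- nonnegativity is absorbing
  have habs1 : ∀ t, (∀ j, 0 ≤ x t j) → ∀ j, 0 ≤ x (t + 1) j := by
    intro t h j
    by_cases h2 : j = a ∨ j = b
    · rw [hf t j h2]; exact h j
    · push Not at h2
      obtain ⟨p, q, hp, hq, hm, he⟩ := hu t j h2.1 h2.2
      rw [he]; linarith [h p, h q]
  by_cases hex : ∃ T, ∀ j, 0 ≤ x T j
  · obtain ⟨T, hT⟩ := hex
    have hall : ∀ t, T ≤ t → ∀ j, 0 ≤ x t j := by
      intro t ht
      induction t, ht using Nat.le_induction with
      | base => exact hT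
      | succ s _ ih => exact habs1 s ih
    refine ⟨T, fun t ht => ?_⟩
    have h1 := hall t ht i
    have h2 := hall (t + 1) (by omega) i
    constructor <;> intro h <;> linarith
  push Not at hex
  -- the leftmost robot
  obtain ⟨m, ⟨hma, hmb⟩, hmin0⟩ := Set.exists_min_image {j : ι | j ≠ a ∧ j ≠ b} (x 0)
    (Set.toFinite _) ⟨i, hia, hib⟩
  have hmin1 : ∀ t j, j ≠ a → j ≠ b → x t m ≤ x t j := by
    intro t
    induction t with
    | zero => intro j h1 h2; exact hmin0 j ⟨h1, h2⟩
    | succ t ih => intro j h1 h2; exact hord1 t m j hma hmb h1 h2 (ih j h1 h2)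
  have hneg : ∀ t, x t m < 0 := by
    intro t
    obtain ⟨j, hj⟩ := hex t
    have h1 : j ≠ a := by rintro rfl; rw [ha] at hj; linarith
    have h2 : j ≠ b := by rintro rfl; rw [hb] at hj; linarith
    linarith [hmin1 t j h1 h2]
  have hmin : ∀ t j, x t m ≤ x t j := by
    intro t j
    by_cases h1 : j = a
    · rw [h1, ha]; exact (hneg t).le
    by_cases h2 : j = b
    · rw [h2, hb]; linarith [hneg t]
    exact hmin1 t j h1 h2
  have hmono : Monotone (fun t => x t m) := by
    refine monotone_nat_of_le_succ fun t => ?_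
    obtain ⟨p, q, hp, hq, hm, he⟩ := hu t m hma hmb
    show x t m ≤ x (t + 1) m
    rw [he]; linarith [hmin t p, hmin t q]
  obtain ⟨c, hcl⟩ : ∃ c, Tendsto (fun t => x t m) atTop (𝓝 c) :=
    ⟨_, tendsto_atTop_ciSup hmono ⟨0, by rintro _ ⟨t, rfl⟩; exact (hneg t).le⟩⟩
  have hc0 : c ≤ 0 := le_of_tendsto' hcl fun t => (hneg t).le
  set C : Set ι := {j | Tendsto (fun t => x t j) atTop (𝓝 c)} with hC
  have hmC : m ∈ C := hcl
  have hCC : ∀ j ∈ C, ∀ k ∈ C, ∀ᶠ t in atTop, |x t j - x t k| ≤ V := by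
    intro j hj k hk
    have h : Tendsto (fun t => |x t j - x t k|) atTop (𝓝 |c - c|) := (hj.sub hk).abs
    rw [sub_self, abs_zero] at h
    exact h.eventually_le_const hV
  -- closure of C under visibility from its nonfaulty members
  have hcl2 : ∀ k ∈ C, k ≠ a → k ≠ b → ∀ j t, |x t j - x t k| ≤ V → j ∈ C := by
    intro k hk hka hkb j t0 hjk
    have hlim : Tendsto (fun t => 2 * x (t + 1) k - x t m) atTop (𝓝 (2 * c - c)) :=
      ((hk.comp (tendsto_add_atTop_nat 1)).const_mul 2).sub hcl
    have e : 2 * c - c = c := by ring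
    rw [e] at hlim
    refine tendsto_of_tendsto_of_tendsto_of_le_of_le' hcl hlim
      (Eventually.of_forall fun t => hmin t j) ?_
    filter_upwards [hCC m hmC k hk, eventually_ge_atTop t0] with t h1 h2
    obtain ⟨p, q, hp, hq, hm, he⟩ := hu t k hka hkb
    have h3 := hm m h1
    have h4 := hm j (hedge t0 t j k h2 hjk)
    rw [he]; linarith [hmin t p]
  have hbC : b ∉ C := by
    intro h
    have h' : Tendsto (fun t => x t b) atTop (𝓝 c) := h
    simp only [hb] at h'
    have := tendsto_nhds_unique h' tendsto_const_nhds
    linarith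
  have haC : a ∈ C := by
    by_contra hna
    have : ∀ j, Relation.ReflTransGen (fun a b => |x 0 a - x 0 b| ≤ V) m j → j ∈ C := by
      intro j hj
      induction hj with
      | refl => exact hmC
      | tail _ h ih =>
        rw [abs_sub_comm] at h
        exact hcl2 _ ih (fun h => hna (h ▸ ih)) (fun h => hbC (h ▸ ih)) _ 0 h
    exact hna (this a (hc m a))
  have hc00 : c = 0 := by
    have h' : Tendsto (fun t => x t a) atTop (𝓝 c) := haC
    simp only [ha] at h'
    exact tendsto_nhds_unique h' tendsto_const_nhds
  subst hc00
  by_cases hiC : i ∈ C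
  · have hev : ∀ k ∈ C, ∀ᶠ t in atTop, ∀ j, j ∈ C → |x t j - x t k| ≤ V := by
      intro k hk
      rw [eventually_all]
      intro j
      by_cases hj : j ∈ C
      · filter_upwards [hCC j hj k hk] with t h _ using h
      · exact Eventually.of_forall fun t h => absurd h hj
    obtain ⟨T, hT⟩ := eventually_atTop.1 ((hev i hiC).and (hev m hmC))
    have hlt : ∀ t, T ≤ t → x (t + 1) i < 0 := by
      intro t ht
      obtain ⟨p, q, hp, hq, hm, he⟩ := hu t i hia hib
      obtain ⟨p', q', hp', hq', hm', he'⟩ := hu t m hma hmb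
      have k1 := hm p' ((hT t ht).1 p' (hcl2 m hmC hma hmb p' t hp'))
      have k2 := hm' p ((hT t ht).2 p (hcl2 i hiC hia hib p t hp))
      have k4 := hm' q ((hT t ht).2 q (hcl2 i hiC hia hib q t hq))
      have := hneg (t + 1)
      linarith
    refine ⟨T + 1, fun t ht => ?_⟩
    obtain ⟨s, rfl⟩ : ∃ s, t = s + 1 := ⟨t - 1, by omega⟩
    exact ⟨fun _ => hlt _ (by omega), fun _ => hlt _ (by omega)⟩
  · have h1 : ∀ᶠ t in atTop, -V < x t m := hcl.eventually_const_lt (by linarith)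
    obtain ⟨T, hT⟩ := eventually_atTop.1 h1
    have hpos : ∀ t, T ≤ t → 0 < x t i := by
      intro t ht
      have h2 : ¬ |x t i - x t m| ≤ V := fun h => hiC (hcl2 m hmC hma hmb i t h)
      rw [abs_of_nonneg (by linarith [hmin t i])] at h2
      linarith [hT t ht]
    refine ⟨T, fun t ht => ?_⟩
    have h2 := hpos t ht
    have h3 := hpos (t + 1) (by omega)
    constructor <;> intro h <;> linarith

/-- (No More Crossing) Every non-faulty robot crosses each of the two faulty
robots only finitely many times. -/
theorem no_more_crossing
    (n : ℕ) (hn : 2 ≤ n) (V D : ℝ) (hV : 0 < V) (hD : 0 < D)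
    (x : ℕ → Fin (n + 1) → ℝ)
    (hfault0 : ∀ t : ℕ, x t 0 = 0)
    (hfaultn : ∀ t : ℕ, x t (Fin.last n) = D)
    (hupd : ∀ t : ℕ, ∀ i : Fin (n + 1), i ≠ 0 → i ≠ Fin.last n →
      x (t + 1) i = (lpos V x t i + rpos V x t i) / 2)
    (hconn : ∀ i j : Fin (n + 1),
      Relation.ReflTransGen (fun a b : Fin (n + 1) => |x 0 a - x 0 b| ≤ V) i j)
    (i : Fin (n + 1)) (hi0 : i ≠ 0) (hin : i ≠ Fin.last n) :
    {t : ℕ | (x t i < 0) ≠ (x (t + 1) i < 0)}.Finite ∧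
      {t : ℕ | (x t i > D) ≠ (x (t + 1) i > D)}.Finite := by

  have hu : ∀ t i, i ≠ 0 → i ≠ Fin.last n → ∃ p q, |x t p - x t i| ≤ V ∧ |x t q - x t i| ≤ V ∧
      (∀ j, |x t j - x t i| ≤ V → x t p ≤ x t j ∧ x t j ≤ x t q) ∧
      x (t + 1) i = (x t p + x t q) / 2 := by
    intro t i h1 h2
    have hfin : (x t '' {j | |x t j - x t i| ≤ V}).Finite := Set.toFinite _
    have hne : (x t '' {j | |x t j - x t i| ≤ V}).Nonempty :=
      ⟨x t i, i, by simpa using hV.le, rfl⟩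
    obtain ⟨p, hp, hpe⟩ := hne.csInf_mem hfin
    obtain ⟨q, hq, hqe⟩ := hne.csSup_mem hfin
    refine ⟨p, q, hp, hq, fun j hj => ⟨?_, ?_⟩, ?_⟩
    · rw [hpe]; exact csInf_le hfin.bddBelow ⟨j, hj, rfl⟩
    · rw [hqe]; exact le_csSup hfin.bddAbove ⟨j, hj, rfl⟩
    · rw [hpe, hqe]; exact hupd t i h1 h2
  constructor
  · obtain ⟨T, hT⟩ := nmc_aux 0 (Fin.last n) V D hV hD x hfault0 hfaultn hu hconn i hi0 hin
    refine (Set.finite_lt_nat T).subset fun t ht => ?_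
    by_contra h
    exact ht (propext (hT t (not_lt.1 h)))
  · have key : ∀ t j k, |(D - x t j) - (D - x t k)| = |x t j - x t k| := by
      intro t j k
      rw [← abs_neg]; congr 1; ring
    obtain ⟨T, hT⟩ := nmc_aux (Fin.last n) 0 V D hV hD (fun t j => D - x t j)
      (by simp [hfaultn]) (by simp [hfault0])
      (by
        intro t i h1 h2
        obtain ⟨p, q, hp, hq, hm, he⟩ := hu t i h2 h1
        refine ⟨q, p, by rwa [key], by rwa [key], fun j hj => ?_, ?_⟩
        · rw [key] at hj
          have := hm j hj
          constructor <;> linarith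
        · show D - x (t + 1) i = _
          rw [he]; ring)
      (by simpa only [key] using hconn) i hin hi0
    refine (Set.finite_lt_nat T).subset fun t ht => ?_
    by_contra h
    have h' := hT t (not_lt.1 h)
    simp only [sub_neg] at h'
    exact ht (propext h')
end

section
/- (Existence of a Size-Stable Time) In the robot model on a line, assume the visibility graph at time 0 is connected. Then there exists a time t₀ such that for all t ≥ t₀ and all robots i, j: (i) |x t i − x t j| ≤ V if and only if |x t₀ i − x t₀ j| ≤ V (the visibility relation no longer changes); (ii) if i and j are both non-faulty then x t i ≤ x t j if and only if x t₀ i ≤ x t₀ j (no more crossings or mergings among non-faulty robots); and (iii) for every non-faulty i, (x t i < 0 ↔ x t₀ i < 0) and (x t i > D ↔ x t₀ i > D) (no more crossings of the faulty robots). -/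
open Filter Topology

section helpers

set_option linter.unusedSectionVars false

variable {ι : Type*} [Fintype ι]

/-- The update rule in terms of explicit extremal visible robots. -/
def Upd (V : ℝ) (x : ℕ → ι → ℝ) (f g : ι) : Prop :=
  ∀ t i, i ≠ f → i ≠ g → ∃ p q, |x t p - x t i| ≤ V ∧ |x t q - x t i| ≤ V ∧
    (∀ k, |x t k - x t i| ≤ V → x t p ≤ x t k ∧ x t k ≤ x t q) ∧
    x (t + 1) i = (x t p + x t q) / 2

theorem ord_step {V : ℝ} {x : ℕ → ι → ℝ} {f g : ι} (hV : 0 < V) (hu : Upd V x f g)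
    {i j : ι} (hif : i ≠ f) (hig : i ≠ g) (hjf : j ≠ f) (hjg : j ≠ g) {t : ℕ}
    (h : x t i ≤ x t j) : x (t + 1) i ≤ x (t + 1) j := by
  obtain ⟨p, q, hp, hq, hb, he⟩ := hu t i hif hig
  obtain ⟨p', q', hp', hq', hb', he'⟩ := hu t j hjf hjg
  rw [abs_le] at hp hq hp' hq'
  have hpi := (hb i (by simp [hV.le]))
  have hpj := (hb' j (by simp [hV.le]))
  have h1 : x t p ≤ x t p' := by
    by_cases hc : x t p' ≤ x t i + V
    · exact (hb p' (by rw [abs_le]; constructor <;> linarith)).1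
    · linarith
  have h2 : x t q ≤ x t q' := by
    by_cases hc : x t j - V ≤ x t q
    · exact (hb' q (by rw [abs_le]; constructor <;> linarith)).2
    · linarith
  linarith

theorem ord_mono {V : ℝ} {x : ℕ → ι → ℝ} {f g : ι} (hV : 0 < V) (hu : Upd V x f g)
    {i j : ι} (hif : i ≠ f) (hig : i ≠ g) (hjf : j ≠ f) (hjg : j ≠ g) {s t : ℕ} (hst : s ≤ t)
    (h : x s i ≤ x s j) : x t i ≤ x t j := by
  induction t, hst using Nat.le_induction with
  | base => exact h
  | succ t _ ih => exact ord_step hV hu hif hig hjf hjg ih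

theorem vis_nn {V : ℝ} {x : ℕ → ι → ℝ} {f g : ι} (hV : 0 < V) (hu : Upd V x f g)
    {i j : ι} (hif : i ≠ f) (hig : i ≠ g) (hjf : j ≠ f) (hjg : j ≠ g) {t : ℕ}
    (hle : x t i ≤ x t j)
    (h : |x t i - x t j| ≤ V) : |x (t + 1) i - x (t + 1) j| ≤ V := by
  have ho := ord_step hV hu hif hig hjf hjg hle
  obtain ⟨p, q, hp, hq, hb, he⟩ := hu t i hif hig
  obtain ⟨p', q', hp', hq', hb', he'⟩ := hu t j hjf hjg
  have h1 := hb j (by rw [abs_sub_comm]; exact h)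
  have h2 := hb' i h
  rw [abs_le] at *
  constructor <;> linarith

theorem vis_nf {V : ℝ} {x : ℕ → ι → ℝ} {f g : ι} (hV : 0 < V) (hu : Upd V x f g)
    {i j : ι} (hif : i ≠ f) (hig : i ≠ g) {t : ℕ} (hj : x (t + 1) j = x t j)
    (h : |x t i - x t j| ≤ V) : |x (t + 1) i - x (t + 1) j| ≤ V := by
  obtain ⟨p, q, hp, hq, hb, he⟩ := hu t i hif hig
  have h1 := hb j (by rw [abs_sub_comm]; exact h)
  have h2 := hb i (by simp [hV.le])
  rw [hj]
  rw [abs_le] at *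
  constructor <;> linarith

theorem vis_step {V : ℝ} {x : ℕ → ι → ℝ} {f g : ι} (hV : 0 < V) (hu : Upd V x f g)
    (hf : ∀ t, x (t + 1) f = x t f) (hg : ∀ t, x (t + 1) g = x t g)
    {i j : ι} {t : ℕ}
    (h : |x t i - x t j| ≤ V) : |x (t + 1) i - x (t + 1) j| ≤ V := by
  by_cases hi : i ≠ f ∧ i ≠ g
  · by_cases hj : j ≠ f ∧ j ≠ g
    · rcases le_total (x t i) (x t j) with hle | hle
      · exact vis_nn hV hu hi.1 hi.2 hj.1 hj.2 hle h
      · rw [abs_sub_comm] at h ⊢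
        exact vis_nn hV hu hj.1 hj.2 hi.1 hi.2 hle h
    · have : x (t + 1) j = x t j := by
        by_cases hjf : j = f
        · rw [hjf, hf]
        · have : j = g := by tauto
          rw [this, hg]
      exact vis_nf hV hu hi.1 hi.2 this h
  · have hic : x (t + 1) i = x t i := by
      by_cases hjf : i = f
      · rw [hjf, hf]
      · have : i = g := by tauto
        rw [this, hg]
    by_cases hj : j ≠ f ∧ j ≠ g
    · rw [abs_sub_comm] at h ⊢
      exact vis_nf hV hu hj.1 hj.2 hic h
    · have : x (t + 1) j = x t j := by
        by_cases hjf : j = f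
        · rw [hjf, hf]
        · have : j = g := by tauto
          rw [this, hg]
      rw [hic, this]; exact h

theorem vis_mono {V : ℝ} {x : ℕ → ι → ℝ} {f g : ι} (hV : 0 < V) (hu : Upd V x f g)
    (hf : ∀ t, x (t + 1) f = x t f) (hg : ∀ t, x (t + 1) g = x t g)
    {i j : ι} {s t : ℕ} (hst : s ≤ t)
    (h : |x s i - x s j| ≤ V) : |x t i - x t j| ≤ V := by
  induction t, hst using Nat.le_induction with
  | base => exact h
  | succ t _ ih => exact vis_step hV hu hf hg ih

/-- Eventually constant truth value. -/
def EC (P : ℕ → Prop) : Prop := (∀ᶠ t in atTop, P t) ∨ (∀ᶠ t in atTop, ¬ P t)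

theorem EC.ev {P : ℕ → Prop} (h : EC P) : ∀ᶠ T in atTop, ∀ t, T ≤ t → (P t ↔ P T) := by
  rcases h with h | h <;> obtain ⟨N, hN⟩ := eventually_atTop.1 h <;>
    refine eventually_atTop.2 ⟨N, fun T hT t ht => ?_⟩ <;>
    have h1 := hN T hT <;> have h2 := hN t (hT.trans ht) <;> tauto

theorem EC.of_mono {P : ℕ → Prop} (h : ∀ s t, s ≤ t → P s → P t) : EC P := by
  by_cases hp : ∃ s, P s
  · obtain ⟨s, hs⟩ := hp
    exact Or.inl (eventually_atTop.2 ⟨s, fun t ht => h s t ht hs⟩)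
  · push Not at hp
    exact Or.inr (Eventually.of_forall hp)

theorem side {V D : ℝ} {x : ℕ → ι → ℝ} {f g : ι} (hV : 0 < V) (hD : 0 < D) (hu : Upd V x f g)
    (hf : ∀ t, x t f = 0) (hg : ∀ t, x t g = D)
    (hconn : ∀ i j : ι, Relation.ReflTransGen (fun a b : ι => |x 0 a - x 0 b| ≤ V) i j)
    {i : ι} (hif : i ≠ f) (hig : i ≠ g) : EC (fun t => x t i < 0) := by
  have hf' : ∀ t, x (t + 1) f = x t f := fun t => by rw [hf, hf]
  have hg' : ∀ t, x (t + 1) g = x t g := fun t => by rw [hg, hg]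
  obtain ⟨a, ha, hmin⟩ := Set.exists_min_image {k : ι | k ≠ f ∧ k ≠ g} (x 0) (Set.toFinite _)
    ⟨i, hif, hig⟩
  have hmin' : ∀ t k, k ≠ f → k ≠ g → x t a ≤ x t k := fun t k h1 h2 =>
    ord_mono hV hu ha.1 ha.2 h1 h2 (Nat.zero_le t) (hmin k ⟨h1, h2⟩)
  by_cases hpos : ∃ s, 0 ≤ x s a
  · right
    obtain ⟨s, hs⟩ := hpos
    have key : ∀ t, s ≤ t → 0 ≤ x t a := by
      intro t hst
      induction t, hst using Nat.le_induction with
      | base => exact hs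
      | succ t _ ih =>
        have hall : ∀ k, 0 ≤ x t k := by
          intro k
          by_cases h1 : k = f
          · rw [h1, hf]
          by_cases h2 : k = g
          · rw [h2, hg]; exact hD.le
          exact ih.trans (hmin' t k h1 h2)
        obtain ⟨p, q, _, _, _, he⟩ := hu t a ha.1 ha.2
        have := hall p
        have := hall q
        linarith
    refine eventually_atTop.2 ⟨s, fun t ht => not_lt.2 ((key t ht).trans (hmin' t i hif hig))⟩
  push Not at hpos
  have hall : ∀ t k, x t a ≤ x t k := by
    intro t k
    by_cases h1 : k = f
    · rw [h1, hf]; exact (hpos t).le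
    by_cases h2 : k = g
    · rw [h2, hg]; linarith [hpos t]
    exact hmin' t k h1 h2
  have hmon : Monotone (fun t => x t a) := by
    refine monotone_nat_of_le_succ fun t => ?_
    obtain ⟨p, q, _, _, _, he⟩ := hu t a ha.1 ha.2
    have := hall t p
    have := hall t q
    linarith
  obtain ⟨P, hP⟩ : ∃ P, Tendsto (fun t => x t a) atTop (𝓝 P) :=
    ⟨_, tendsto_atTop_ciSup hmon ⟨0, by rintro _ ⟨t, rfl⟩; exact (hpos t).le⟩⟩
  have hP0 : P ≤ 0 := le_of_tendsto' hP fun t => (hpos t).le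
  -- closure of convergence under adjacency
  have hcl : ∀ j, j ≠ f → j ≠ g → Tendsto (fun t => x t j) atTop (𝓝 P) →
      ∀ k s, |x s k - x s j| ≤ V → Tendsto (fun t => x t k) atTop (𝓝 P) := by
    intro j hjf hjg hj k s hk
    have hj1 : Tendsto (fun t => x (t + 1) j) atTop (𝓝 P) :=
      hj.comp (tendsto_add_atTop_nat 1)
    have hup : Tendsto (fun t => 2 * x (t + 1) j - x t a) atTop (𝓝 P) := by
      have := (hj1.const_mul 2).sub hP
      rwa [show 2 * P - P = P by ring] at this
    refine tendsto_of_tendsto_of_tendsto_of_le_of_le' hP hup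
      (Eventually.of_forall fun t => hall t k) ?_
    refine eventually_atTop.2 ⟨s, fun t ht => ?_⟩
    obtain ⟨p, q, _, _, hb, he⟩ := hu t j hjf hjg
    have h1 := (hb k (vis_mono hV hu hf' hg' ht hk)).2
    have h2 := hall t p
    linarith
  have hng : ¬ Tendsto (fun t => x t g) atTop (𝓝 P) := by
    intro h
    simp only [hg] at h
    have := tendsto_nhds_unique h tendsto_const_nhds
    linarith
  have hP' : P = 0 := by
    by_contra hne
    have hnf : ¬ Tendsto (fun t => x t f) atTop (𝓝 P) := by
      intro h
      simp only [hf] at h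
      exact hne (tendsto_nhds_unique h tendsto_const_nhds)
    suffices hr : ∀ m, Relation.ReflTransGen (fun a b : ι => |x 0 a - x 0 b| ≤ V) a m →
        Tendsto (fun t => x t m) atTop (𝓝 P) from hnf (hr f (hconn a f))
    intro m hreach
    induction hreach with
    | refl => exact hP
    | @tail b c _ hbc ih =>
      refine hcl b ?_ ?_ ih c 0 (by rw [abs_sub_comm]; exact hbc)
      · rintro rfl; exact hnf ih
      · rintro rfl; exact hng ih
  subst hP'
  by_cases hi : Tendsto (fun t => x t i) atTop (𝓝 0)
  · left
    -- all converging robots are eventually close to 0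
    have hclose : ∀ᶠ t in atTop, ∀ k, Tendsto (fun t => x t k) atTop (𝓝 0) → |x t k| < V / 2 := by
      rw [eventually_all]
      intro k
      by_cases hk : Tendsto (fun t => x t k) atTop (𝓝 0)
      · have := hk.abs
        rw [abs_zero] at this
        filter_upwards [this.eventually (gt_mem_nhds (half_pos hV))] with t ht _ using ht
      · exact Eventually.of_forall fun t h => absurd h hk
    obtain ⟨T, hT⟩ := eventually_atTop.1 hclose
    refine eventually_atTop.2 ⟨T + 1, fun t ht => ?_⟩
    obtain ⟨s, rfl⟩ : ∃ s, t = s + 1 := ⟨t - 1, by omega⟩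
    have hTs := hT s (by omega)
    have hvis : ∀ j k, Tendsto (fun t => x t j) atTop (𝓝 0) →
        Tendsto (fun t => x t k) atTop (𝓝 0) → |x s k - x s j| ≤ V := by
      intro j k h1 h2
      have h1 := abs_lt.1 (hTs j h1)
      have h2 := abs_lt.1 (hTs k h2)
      rw [abs_le]; constructor <;> linarith
    obtain ⟨p, q, hp, hq, hb, he⟩ := hu s i hif hig
    obtain ⟨p', q', hp', hq', hb', he'⟩ := hu s a ha.1 ha.2
    have sp := hcl i hif hig hi p s hp
    have sq := hcl i hif hig hi q s hq
    have sp' := hcl a ha.1 ha.2 hP p' s hp'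
    have sq' := hcl a ha.1 ha.2 hP q' s hq'
    have e1 := (hb p' (hvis i p' hi sp')).1
    have e2 := (hb q' (hvis i q' hi sq')).2
    have e3 := (hb' p (hvis a p hP sp)).1
    have e4 := (hb' q (hvis a q hP sq)).2
    have := hpos (s + 1)
    linarith
  · right
    have h1 : ∀ᶠ t in atTop, -V < x t a := hP.eventually (lt_mem_nhds (by linarith))
    filter_upwards [h1] with t ht hneg
    apply hi
    refine hcl a ha.1 ha.2 hP i t ?_
    have := hall t i
    rw [abs_le]; constructor <;> linarith

end helpers

/-- (Existence of a Size-Stable Time) Eventually the visibility relation is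
frozen, non-faulty robots no longer cross or merge, and no robot crosses a
faulty robot any more. -/
theorem size_stable_time_exists
    (n : ℕ) (hn : 2 ≤ n) (V D : ℝ) (hV : 0 < V) (hD : 0 < D)
    (x : ℕ → Fin (n + 1) → ℝ)
    (hfault0 : ∀ t : ℕ, x t 0 = 0)
    (hfaultn : ∀ t : ℕ, x t (Fin.last n) = D)
    (hupd : ∀ t : ℕ, ∀ i : Fin (n + 1), i ≠ 0 → i ≠ Fin.last n →
      x (t + 1) i = (lpos V x t i + rpos V x t i) / 2)
    (hconn : ∀ i j : Fin (n + 1),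
      Relation.ReflTransGen (fun a b : Fin (n + 1) => |x 0 a - x 0 b| ≤ V) i j)
    : ∃ t₀ : ℕ, ∀ t : ℕ, t₀ ≤ t → ∀ i j : Fin (n + 1),
      ((|x t i - x t j| ≤ V) ↔ (|x t₀ i - x t₀ j| ≤ V)) ∧
      (i ≠ 0 → i ≠ Fin.last n → j ≠ 0 → j ≠ Fin.last n →
        ((x t i ≤ x t j) ↔ (x t₀ i ≤ x t₀ j))) ∧
      (i ≠ 0 → i ≠ Fin.last n →
        ((x t i < 0 ↔ x t₀ i < 0) ∧ (x t i > D ↔ x t₀ i > D))) := by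
  have hne : (0 : Fin (n + 1)) ≠ Fin.last n := by
    intro h
    have := congrArg Fin.val h
    simp at this
    omega
  have hu : Upd V x 0 (Fin.last n) := by
    intro t i h0 hl
    have hne : (x t '' {j | |x t j - x t i| ≤ V}).Nonempty := ⟨x t i, i, by simp [hV.le], rfl⟩
    have hfin : (x t '' {j | |x t j - x t i| ≤ V}).Finite := Set.toFinite _
    obtain ⟨p, hp, hpe⟩ := hne.csInf_mem hfin
    obtain ⟨q, hq, hqe⟩ := hne.csSup_mem hfin
    refine ⟨p, q, hp, hq, fun k hk => ⟨?_, ?_⟩, ?_⟩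
    · rw [hpe]; exact csInf_le hfin.bddBelow ⟨k, hk, rfl⟩
    · rw [hqe]; exact le_csSup hfin.bddAbove ⟨k, hk, rfl⟩
    · rw [hupd t i h0 hl, hpe, hqe]; rfl
  have hf' : ∀ t, x (t + 1) 0 = x t 0 := fun t => by rw [hfault0, hfault0]
  have hg' : ∀ t, x (t + 1) (Fin.last n) = x t (Fin.last n) := fun t => by
    rw [hfaultn, hfaultn]
  have hu' : Upd V (fun t i => D - x t i) (Fin.last n) 0 := by
    intro t i hl h0
    obtain ⟨p, q, hp, hq, hb, he⟩ := hu t i h0 hl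
    have e : ∀ k, |D - x t k - (D - x t i)| = |x t k - x t i| := fun k => by
      rw [abs_sub_comm (x t k)]; congr 1; ring
    refine ⟨q, p, ?_, ?_, fun k hk => ?_, ?_⟩
    · rw [e]; exact hq
    · rw [e]; exact hp
    · rw [e] at hk
      have := hb k hk
      constructor <;> linarith [this.1, this.2]
    · simp only [he]; ring
  have hc' : ∀ i j : Fin (n + 1), Relation.ReflTransGen
      (fun a b : Fin (n + 1) => |D - x 0 a - (D - x 0 b)| ≤ V) i j := by
    intro i j
    refine Relation.ReflTransGen.mono (fun a b hab => ?_) i j (hconn i j)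
    rw [abs_sub_comm] at hab
    rwa [show D - x 0 a - (D - x 0 b) = x 0 b - x 0 a by ring]
  have main : ∀ᶠ T in atTop, ∀ i j : Fin (n + 1), ∀ t, T ≤ t →
      ((|x t i - x t j| ≤ V) ↔ (|x T i - x T j| ≤ V)) ∧
      (i ≠ 0 → i ≠ Fin.last n → j ≠ 0 → j ≠ Fin.last n →
        ((x t i ≤ x t j) ↔ (x T i ≤ x T j))) ∧
      (i ≠ 0 → i ≠ Fin.last n →
        ((x t i < 0 ↔ x T i < 0) ∧ (x t i > D ↔ x T i > D))) := by
    rw [eventually_all]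
    intro i
    rw [eventually_all]
    intro j
    have A : EC (fun t => |x t i - x t j| ≤ V) :=
      EC.of_mono fun s t hst h => vis_mono hV hu hf' hg' hst h
    have B : EC (fun t => i ≠ 0 ∧ i ≠ Fin.last n ∧ j ≠ 0 ∧ j ≠ Fin.last n ∧ x t i ≤ x t j) :=
      EC.of_mono fun s t hst ⟨h1, h2, h3, h4, h⟩ =>
        ⟨h1, h2, h3, h4, ord_mono hV hu h1 h2 h3 h4 hst h⟩
    by_cases hi : i ≠ 0 ∧ i ≠ Fin.last n
    · have C := side hV hD hu hfault0 hfaultn hconn hi.1 hi.2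
      have E := side (x := fun t i => D - x t i) hV hD hu' (fun t => by simp [hfaultn])
        (fun t => by simp [hfault0]) hc' hi.2 hi.1
      filter_upwards [A.ev, B.ev, C.ev, E.ev] with T a b c e t ht
      have b := b t ht
      have e := e t ht
      simp only [sub_neg] at e
      refine ⟨a t ht, fun h1 h2 h3 h4 => ?_, fun _ _ => ⟨c t ht, e⟩⟩
      simpa [h1, h2, h3, h4] using b
    · filter_upwards [A.ev] with T a t ht
      exact ⟨a t ht, fun h1 h2 => absurd ⟨h1, h2⟩ hi, fun h1 h2 => absurd ⟨h1, h2⟩ hi⟩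
  obtain ⟨T, hT⟩ := main.exists
  exact ⟨T, fun t ht i j => hT i j t ht⟩
end

section
/- (Preserved Farthest Neighbours) In the robot model on a line, assume the visibility graph at time 0 is connected. Then there exist a time t₀ and maps ρ, λ : Fin (n+1) → Fin (n+1) such that for every t ≥ t₀ and every robot i: ρ i ∈ N(i,t) with x t (ρ i) = r(i,t), and λ i ∈ N(i,t) with x t (λ i) = l(i,t). That is, from some time on, the farthest right and farthest left visible neighbours of every robot are realized by fixed robots that never change. -/
open Filter Topology

/-- Abstract symmetric form of the model. -/
structure RM {ι : Type} (V P Q : ℝ) (p q : ι) (x : ℕ → ι → ℝ) : Prop where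
  hV : 0 < V
  hp : ∀ t, x t p = P
  hq : ∀ t, x t q = Q
  upd : ∀ t i, i ≠ p → i ≠ q → ∃ a b, |x t a - x t i| ≤ V ∧ |x t b - x t i| ≤ V ∧
    (∀ k, |x t k - x t i| ≤ V → x t a ≤ x t k ∧ x t k ≤ x t b) ∧
    x (t + 1) i = (x t a + x t b) / 2
  conn : ∀ i j, Relation.ReflTransGen (fun a b => |x 0 a - x 0 b| ≤ V) i j

namespace RM

variable {ι : Type} {V P Q : ℝ} {p q : ι} {x : ℕ → ι → ℝ}

lemma neg (h : RM V P Q p q x) : RM V (-Q) (-P) q p (fun t i => - x t i) := by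
  have e : ∀ u v : ℝ, |-u - -v| = |u - v| := fun u v => by
    rw [← abs_neg]; congr 1; ring
  refine ⟨h.hV, fun t => by simp [h.hq], fun t => by simp [h.hp], ?_, ?_⟩
  · intro t i hi hj
    obtain ⟨a, b, h1, h2, h3, h4⟩ := h.upd t i hj hi
    refine ⟨b, a, by rwa [e], by rwa [e], ?_, by rw [h4]; ring⟩
    intro k hk
    rw [e] at hk
    have := h3 k hk
    constructor <;> linarith [this.1, this.2]
  · intro i j
    simp only [e]
    exact h.conn i j

lemma fixed_step (h : RM V P Q p q x) {t : ℕ} {i j : ι} (hi : ∀ t, x t i = x 0 i)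
    (hj1 : j ≠ p) (hj2 : j ≠ q) (hv : |x t i - x t j| ≤ V) :
    |x (t+1) i - x (t+1) j| ≤ V := by
  obtain ⟨a, b, h1, h2, h3, h4⟩ := h.upd t j hj1 hj2
  have := h3 i hv
  rw [abs_le] at *
  rw [h4]
  have e1 := hi t
  have e2 := hi (t+1)
  constructor <;> linarith [this.1, this.2]

lemma edge (h : RM V P Q p q x) {t : ℕ} {i j : ι} (hv : |x t i - x t j| ≤ V) :
    |x (t+1) i - x (t+1) j| ≤ V := by
  have fp : ∀ t, x t p = x 0 p := fun t => by rw [h.hp, h.hp]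
  have fq : ∀ t, x t q = x 0 q := fun t => by rw [h.hq, h.hq]
  by_cases hi : i = p ∨ i = q
  · have fi : ∀ t, x t i = x 0 i := by rcases hi with rfl | rfl <;> assumption
    by_cases hj : j = p ∨ j = q
    · have fj : ∀ t, x t j = x 0 j := by rcases hj with rfl | rfl <;> assumption
      rw [fi, fj]; rwa [fi, fj] at hv
    · push Not at hj
      exact h.fixed_step fi hj.1 hj.2 hv
  · push Not at hi
    by_cases hj : j = p ∨ j = q
    · have fj : ∀ t, x t j = x 0 j := by rcases hj with rfl | rfl <;> assumption
      rw [abs_sub_comm] at hv ⊢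
      exact h.fixed_step fj hi.1 hi.2 hv
    · push Not at hj
      obtain ⟨a, b, h1, h2, h3, h4⟩ := h.upd t i hi.1 hi.2
      obtain ⟨c, d, k1, k2, k3, k4⟩ := h.upd t j hj.1 hj.2
      have A := k3 i hv
      have B := h3 j (by rwa [abs_sub_comm])
      rw [abs_le] at *
      rw [h4, k4]
      constructor <;> linarith [A.1, A.2, B.1, B.2]

lemma order (h : RM V P Q p q x) {t : ℕ} {i j : ι} (hi1 : i ≠ p) (hi2 : i ≠ q)
    (hj1 : j ≠ p) (hj2 : j ≠ q) (hv : x t i ≤ x t j) : x (t+1) i ≤ x (t+1) j := by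
  obtain ⟨a, b, h1, h2, h3, h4⟩ := h.upd t i hi1 hi2
  obtain ⟨c, d, k1, k2, k3, k4⟩ := h.upd t j hj1 hj2
  have hV := h.hV
  have ii := h3 i (by simp [hV.le])
  have jj := k3 j (by simp [hV.le])
  have A : x t a ≤ x t c := by
    by_contra hc
    push Not at hc
    have := (h3 c (by rw [abs_le] at *; constructor <;> linarith [ii.1])).1
    linarith
  have B : x t b ≤ x t d := by
    by_contra hc
    push Not at hc
    have := (k3 b (by rw [abs_le] at *; constructor <;> linarith [jj.2])).2
    linarith
  rw [h4, k4]; linarith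

lemma order_ge (h : RM V P Q p q x) {T : ℕ} {i j : ι} (hi1 : i ≠ p) (hi2 : i ≠ q)
    (hj1 : j ≠ p) (hj2 : j ≠ q) (hv : x T i ≤ x T j) : ∀ t, T ≤ t → x t i ≤ x t j := by
  intro t ht
  induction t, ht using Nat.le_induction with
  | base => exact hv
  | succ t _ ih => exact h.order hi1 hi2 hj1 hj2 ih

lemma stab [Finite ι] (h : RM V P Q p q x) :
    ∃ T, ∀ t, T ≤ t → ∀ i j, (∃ s, |x s i - x s j| ≤ V) → |x t i - x t j| ≤ V := by
  rw [← eventually_atTop, eventually_all]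
  intro i
  rw [eventually_all]
  intro j
  by_cases hs : ∃ s, |x s i - x s j| ≤ V
  · obtain ⟨s, hs⟩ := hs
    filter_upwards [eventually_ge_atTop s] with t ht _
    induction t, ht using Nat.le_induction with
    | base => exact hs
    | succ t _ ih => exact h.edge ih
  · exact Eventually.of_forall fun t hh => absurd hh hs

lemma low_side [Finite ι] (h : RM V P Q p q x) (hPQ : P < Q) (m : ι) :
    (∀ᶠ t in atTop, x t p ≤ x t m) ∨ (∀ᶠ t in atTop, x t m ≤ x t p) := by
  have hV := h.hV
  by_cases hall : ∃ t, ∀ i, P ≤ x t i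
  · obtain ⟨T, hT⟩ := hall
    left
    have : ∀ t, T ≤ t → ∀ i, P ≤ x t i := by
      intro t ht
      induction t, ht using Nat.le_induction with
      | base => exact hT
      | succ t _ ih =>
        intro i
        by_cases h1 : i = p
        · rw [h1, h.hp]
        by_cases h2 : i = q
        · rw [h2, h.hq]; exact hPQ.le
        obtain ⟨a, b, -, -, -, e⟩ := h.upd t i h1 h2
        rw [e]; linarith [ih a, ih b]
    filter_upwards [eventually_ge_atTop T] with t ht
    rw [h.hp]; exact this t ht m
  push Not at hall
  obtain ⟨T, hT⟩ := h.stab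
  have : Nonempty ι := ⟨p⟩
  obtain ⟨a, ha⟩ := Finite.exists_min (x T)
  have nf : ∀ t i, x t i < P → i ≠ p ∧ i ≠ q := by
    intro t i hi
    constructor
    · rintro rfl; rw [h.hp] at hi; exact lt_irrefl _ hi
    · rintro rfl; rw [h.hq] at hi; linarith
  have haP : x T a < P := by
    obtain ⟨i, hi⟩ := hall T
    exact (ha i).trans_lt hi
  obtain ⟨hap, haq⟩ := nf _ _ haP
  have hmin : ∀ t, T ≤ t → ∀ i, i ≠ p → i ≠ q → x t a ≤ x t i :=
    fun t ht i h1 h2 => h.order_ge hap haq h1 h2 (ha i) t ht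
  have haP : ∀ t, T ≤ t → x t a < P := by
    intro t ht
    obtain ⟨i, hi⟩ := hall t
    obtain ⟨h1, h2⟩ := nf _ _ hi
    exact (hmin t ht i h1 h2).trans_lt hi
  have hmin : ∀ t, T ≤ t → ∀ i, x t a ≤ x t i := by
    intro t ht i
    by_cases h1 : i = p
    · rw [h1, h.hp]; exact (haP t ht).le
    by_cases h2 : i = q
    · rw [h2, h.hq]; linarith [haP t ht]
    exact hmin t ht i h1 h2
  have hself : ∀ t i, |x t i - x t i| ≤ V := fun t i => by simp [hV.le]
  -- upper bound on visible robots by the increment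
  have hinc : ∀ t, T ≤ t → ∀ k, |x t k - x t a| ≤ V →
      x t k - x t a ≤ 2 * (x (t+1) a - x t a) := by
    intro t ht k hk
    obtain ⟨c, b, h1, h2, h3, e⟩ := h.upd t a hap haq
    have := (h3 a (hself t a)).1
    have := hmin t ht c
    have := (h3 k hk).2
    rw [e]; linarith
  have hmono : ∀ t, T ≤ t → x t a ≤ x (t+1) a := by
    intro t ht
    have := hinc t ht a (hself t a)
    linarith
  have hconv : ∃ c, Tendsto (fun t => x (t + T) a) atTop (𝓝 c) := by
    have hm : Monotone (fun t => x (t + T) a) := by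
      refine monotone_nat_of_le_succ fun t => ?_
      have := hmono (t + T) (by omega)
      rwa [show t + T + 1 = t + 1 + T by omega] at this
    refine ⟨_, tendsto_atTop_ciSup hm ⟨P, ?_⟩⟩
    rintro _ ⟨t, rfl⟩
    exact (haP (t + T) (by omega)).le
  obtain ⟨c, hc⟩ := hconv
  rw [tendsto_add_atTop_iff_nat (f := fun t => x t a)] at hc
  have hd : Tendsto (fun t => x (t+1) a - x t a) atTop (𝓝 0) := by
    have := ((tendsto_add_atTop_iff_nat (f := fun t => x t a) 1).2 hc).sub hc
    simpa using this
  obtain ⟨ε, hε, hε1, hε2⟩ : ∃ ε > 0, ε ≤ V / 8 ∧ ε ≤ (Q - P) / 2 :=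
    ⟨min (V/8) ((Q-P)/2), lt_min (by linarith) (by linarith), min_le_left _ _, min_le_right _ _⟩
  obtain ⟨T2, hT2⟩ := eventually_atTop.1
    ((hd.eventually (gt_mem_nhds (show (0:ℝ) < ε/2 by linarith))).and (eventually_ge_atTop T))
  set E : ι → ι → Prop := fun i j => ∃ s, |x s i - x s j| ≤ V with hE
  have hcl : ∀ t, T2 ≤ t → ∀ k, E a k → x t k ≤ x t a + ε := by
    intro t ht k hk
    obtain ⟨h1, h2⟩ := hT2 t ht
    have := hinc t h2 k (by rw [abs_sub_comm]; exact hT t h2 a k hk)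
    linarith
  have hfar : ∀ t, T2 ≤ t → ∀ k, ¬ E a k → x t a + V < x t k := by
    intro t ht k hk
    obtain ⟨h1, h2⟩ := hT2 t ht
    by_contra hcon
    push Not at hcon
    apply hk
    refine ⟨t, ?_⟩
    have := hmin t h2 k
    rw [abs_le]; constructor <;> linarith
  have hnq : ¬ E a q := by
    intro hq
    have := hcl T2 le_rfl q hq
    rw [h.hq] at this
    linarith [haP T2 (hT2 T2 le_rfl).2]
  have htr : ∀ k, k ≠ p → k ≠ q → E a k → ∀ j, E k j → E a j := by
    intro k hkp hkq hak j hkj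
    by_contra hj
    have h1 := hfar T2 le_rfl j hj
    have hTT := (hT2 T2 le_rfl).2
    obtain ⟨l, r, -, -, h3, e⟩ := h.upd T2 k hkp hkq
    have h4 := (h3 j (by rw [abs_sub_comm]; exact hT T2 hTT k j hkj)).2
    have h5 := hmin T2 hTT l
    have h6 := hcl (T2+1) (by omega) k hak
    have h7 := (hT2 T2 le_rfl).1
    linarith
  have hap' : E a p := by
    by_contra hcon
    have : ∀ j, Relation.ReflTransGen (fun a b => |x 0 a - x 0 b| ≤ V) a j → E a j := by
      intro j hj
      induction hj with
      | refl => exact ⟨0, hself 0 a⟩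
      | tail _ hs ih =>
        refine htr _ ?_ ?_ ih _ ⟨0, hs⟩
        · rintro rfl; exact hcon ih
        · rintro rfl; exact hnq ih
    exact hcon (this p (h.conn a p))
  by_cases hmp : m = p
  · left; rw [hmp]; exact Eventually.of_forall fun _ => le_rfl
  by_cases hmq : m = q
  · left; rw [hmq]; exact Eventually.of_forall fun _ => by rw [h.hp, h.hq]; exact hPQ.le
  by_cases hm : E a m
  · right
    refine eventually_atTop.2 ⟨T2 + 1, fun t' ht' => ?_⟩
    obtain ⟨t, rfl⟩ : ∃ t, t' = t + 1 := ⟨t' - 1, by omega⟩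
    have ht : T2 ≤ t := by omega
    have hTt := (hT2 t ht).2
    obtain ⟨l, r, h1, h2, h3, e⟩ := h.upd t m hmp hmq
    obtain ⟨l', r', h1', h2', h3', e'⟩ := h.upd t a hap haq
    have har : E a r := htr m hmp hmq hm r ⟨t, by rwa [abs_sub_comm]⟩
    have A := (h3 a (hT t hTt a m hm)).1
    have B := (h3' r (by rw [abs_sub_comm]; exact hT t hTt a r har)).2
    have C := hmin t hTt l'
    have F := haP (t+1) (by omega)
    rw [h.hp, e]
    linarith
  · left
    refine eventually_atTop.2 ⟨T2, fun t ht => ?_⟩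
    have A := hfar t ht m hm
    have B := hcl t ht p hap'
    linarith

lemma high_side [Finite ι] (h : RM V P Q p q x) (hPQ : P < Q) (m : ι) :
    (∀ᶠ t in atTop, x t q ≤ x t m) ∨ (∀ᶠ t in atTop, x t m ≤ x t q) := by
  have := h.neg.low_side (by linarith) m
  simpa [or_comm] using this

lemma total [Finite ι] (h : RM V P Q p q x) (hPQ : P < Q) (i j : ι) :
    (∀ᶠ t in atTop, x t i ≤ x t j) ∨ (∀ᶠ t in atTop, x t j ≤ x t i) := by
  by_cases i1 : i = p
  · rw [i1]; exact h.low_side hPQ j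
  by_cases i2 : i = q
  · rw [i2]; exact h.high_side hPQ j
  by_cases j1 : j = p
  · rw [j1]; exact (h.low_side hPQ i).symm
  by_cases j2 : j = q
  · rw [j2]; exact (h.high_side hPQ i).symm
  rcases le_total (x 0 i) (x 0 j) with h0 | h0
  · left; exact eventually_atTop.2 ⟨0, h.order_ge i1 i2 j1 j2 h0⟩
  · right; exact eventually_atTop.2 ⟨0, h.order_ge j1 j2 i1 i2 h0⟩

lemma exists_max [Finite ι] (h : RM V P Q p q x) (hPQ : P < Q) (i : ι) :
    ∃ r, ∀ᶠ t in atTop, |x t r - x t i| ≤ V ∧ ∀ k, |x t k - x t i| ≤ V → x t k ≤ x t r := by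
  classical
  have := Fintype.ofFinite ι
  have key : ∀ s : Finset ι, s.Nonempty →
      ∃ r ∈ s, ∀ k ∈ s, ∀ᶠ t in atTop, x t k ≤ x t r := by
    intro s hs
    induction hs using Finset.Nonempty.cons_induction with
    | singleton a => exact ⟨a, by simp, by simp⟩
    | cons a s has hs ih =>
      obtain ⟨r, hr, hk⟩ := ih
      rcases h.total hPQ a r with H | H
      · refine ⟨r, by simp [hr], ?_⟩
        intro k hks
        rcases Finset.mem_cons.1 hks with rfl | hks
        · exact H
        · exact hk k hks
      · refine ⟨a, by simp, ?_⟩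
        intro k hks
        rcases Finset.mem_cons.1 hks with rfl | hks
        · exact Eventually.of_forall fun _ => le_rfl
        · filter_upwards [hk k hks, H] with t h1 h2 using h1.trans h2
  obtain ⟨r, hr, hk⟩ := key (Finset.univ.filter fun k => ∃ s, |x s k - x s i| ≤ V)
    ⟨i, by simp [h.hV.le]⟩
  obtain ⟨T, hT⟩ := h.stab
  refine ⟨r, ?_⟩
  have hk' : ∀ᶠ t in atTop, ∀ k, (∃ s, |x s k - x s i| ≤ V) → x t k ≤ x t r := by
    rw [eventually_all]
    intro k
    by_cases hs : ∃ s, |x s k - x s i| ≤ V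
    · filter_upwards [hk k (by simpa using hs)] with t ht _ using ht
    · exact Eventually.of_forall fun t hh => absurd hh hs
  filter_upwards [hk', eventually_ge_atTop T] with t h1 h2
  exact ⟨hT t h2 r i (by simpa using hr), fun k hk => h1 k ⟨t, hk⟩⟩

end RM

/-- (Preserved Farthest Neighbours) From some time on, the farthest right and
farthest left visible neighbours of every robot are realized by fixed robots. -/
theorem preserved_farthest_neighbours
    (n : ℕ) (hn : 2 ≤ n) (V D : ℝ) (hV : 0 < V) (hD : 0 < D)
    (x : ℕ → Fin (n + 1) → ℝ)
    (hfault0 : ∀ t : ℕ, x t 0 = 0)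
    (hfaultn : ∀ t : ℕ, x t (Fin.last n) = D)
    (hupd : ∀ t : ℕ, ∀ i : Fin (n + 1), i ≠ 0 → i ≠ Fin.last n →
      x (t + 1) i = (lpos V x t i + rpos V x t i) / 2)
    (hconn : ∀ i j : Fin (n + 1),
      Relation.ReflTransGen (fun a b : Fin (n + 1) => |x 0 a - x 0 b| ≤ V) i j)
    : ∃ t₀ : ℕ, ∃ ρ lam : Fin (n + 1) → Fin (n + 1),
      ∀ t : ℕ, t₀ ≤ t → ∀ i : Fin (n + 1),
        (|x t (ρ i) - x t i| ≤ V ∧ x t (ρ i) = rpos V x t i) ∧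
        (|x t (lam i) - x t i| ≤ V ∧ x t (lam i) = lpos V x t i) := by
  have rmax : ∀ t i r, |x t r - x t i| ≤ V → (∀ k, |x t k - x t i| ≤ V → x t k ≤ x t r) →
      x t r = rpos V x t i := by
    intro t i r h1 h2
    have hg : IsGreatest (x t '' {j | |x t j - x t i| ≤ V}) (x t r) := by
      refine ⟨⟨r, h1, rfl⟩, ?_⟩
      rintro _ ⟨k, hk, rfl⟩
      exact h2 k hk
    exact hg.csSup_eq.symm
  have lmin : ∀ t i r, |x t r - x t i| ≤ V → (∀ k, |x t k - x t i| ≤ V → x t r ≤ x t k) →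
      x t r = lpos V x t i := by
    intro t i r h1 h2
    have hg : IsLeast (x t '' {j | |x t j - x t i| ≤ V}) (x t r) := by
      refine ⟨⟨r, h1, rfl⟩, ?_⟩
      rintro _ ⟨k, hk, rfl⟩
      exact h2 k hk
    exact hg.csInf_eq.symm
  have h : RM V 0 D 0 (Fin.last n) x := by
    refine ⟨hV, hfault0, hfaultn, ?_, hconn⟩
    intro t i hi hj
    have hne : ({j | |x t j - x t i| ≤ V} : Set (Fin (n+1))).Nonempty := ⟨i, by simp [hV.le]⟩
    obtain ⟨a, ha, ha'⟩ := Set.exists_min_image _ (x t) (Set.toFinite _) hne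
    obtain ⟨b, hb, hb'⟩ := Set.exists_max_image _ (x t) (Set.toFinite _) hne
    refine ⟨a, b, ha, hb, fun k hk => ⟨ha' k hk, hb' k hk⟩, ?_⟩
    rw [hupd t i hi hj, lmin t i a ha ha', rmax t i b hb hb']
  choose ρ hρ using h.exists_max hD
  choose lam hlam using h.neg.exists_max (neg_lt_neg hD)
  have e : ∀ u v : ℝ, |-u - -v| = |u - v| := fun u v => by
    rw [← abs_neg]; congr 1; ring
  simp only [e, neg_le_neg_iff] at hlam
  obtain ⟨t₀, ht₀⟩ := eventually_atTop.1 ((eventually_all.2 hρ).and (eventually_all.2 hlam))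
  refine ⟨t₀, ρ, lam, fun t ht i => ?_⟩
  obtain ⟨h1, h2⟩ := ht₀ t ht
  exact ⟨⟨(h1 i).1, rmax t i _ (h1 i).1 (h1 i).2⟩, ⟨(h2 i).1, lmin t i _ (h2 i).1 (h2 i).2⟩⟩
end

section
/- (Existence of the Primary Chain) In the robot model on a line, assume the visibility graph at time 0 is connected. Then there exist a time t₀, an integer k ≥ 1, and robots i₀, i₁, …, i_k with i₀ = 0 and i_k = n (the two faulty robots) such that for every t ≥ t₀ and every 0 ≤ j ≤ k−1: r(i_j, t) = x t i_{j+1} and l(i_{j+1}, t) = x t i_j. That is, from some time on there is a mutual chain of robots connecting the left faulty robot to the right faulty robot, in which consecutive robots are each other's farthest visible neighbours. -/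
open Filter Topology

open Classical in
/-- Neighbourhood finset. -/
noncomputable def nbr {n : ℕ} (A : Fin (n+1) → Fin (n+1) → Prop) (i : Fin (n+1)) :
    Finset (Fin (n+1)) := Finset.univ.filter (fun j => j = i ∨ A i j)

theorem nbr_ne {n : ℕ} (A : Fin (n+1) → Fin (n+1) → Prop) (i : Fin (n+1)) :
    (nbr A i).Nonempty := ⟨i, by simp [nbr]⟩

theorem mem_nbr {n : ℕ} {A : Fin (n+1) → Fin (n+1) → Prop} (hr : ∀ i, A i i) {i j : Fin (n+1)} :
    j ∈ nbr A i ↔ A i j := by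
  simp only [nbr, Finset.mem_filter, Finset.mem_univ, true_and]
  constructor
  · rintro (rfl | h)
    · exact hr _
    · exact h
  · exact Or.inr

noncomputable def mx {n : ℕ} (A : Fin (n+1) → Fin (n+1) → Prop) (y : Fin (n+1) → ℝ)
    (i : Fin (n+1)) : ℝ := (nbr A i).sup' (nbr_ne A i) y

noncomputable def mn {n : ℕ} (A : Fin (n+1) → Fin (n+1) → Prop) (y : Fin (n+1) → ℝ)
    (i : Fin (n+1)) : ℝ := (nbr A i).inf' (nbr_ne A i) y

noncomputable def stepF {n : ℕ} (A : Fin (n+1) → Fin (n+1) → Prop) (D : ℝ)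
    (y : Fin (n+1) → ℝ) (i : Fin (n+1)) : ℝ :=
  if i = 0 then 0 else if i = Fin.last n then D else (mn A y i + mx A y i) / 2

section
variable {n : ℕ} {A : Fin (n+1) → Fin (n+1) → Prop}

theorem le_mx (hr : ∀ i, A i i) (y : Fin (n+1) → ℝ) {i j : Fin (n+1)} (h : A i j) :
    y j ≤ mx A y i := Finset.le_sup' y ((mem_nbr hr).2 h)

theorem mn_le (hr : ∀ i, A i i) (y : Fin (n+1) → ℝ) {i j : Fin (n+1)} (h : A i j) :
    mn A y i ≤ y j := Finset.inf'_le y ((mem_nbr hr).2 h)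

theorem mx_ex (hr : ∀ i, A i i) (y : Fin (n+1) → ℝ) (i : Fin (n+1)) :
    ∃ j, A i j ∧ y j = mx A y i := by
  obtain ⟨j, hj, h⟩ := Finset.exists_mem_eq_sup' (nbr_ne A i) y
  exact ⟨j, (mem_nbr hr).1 hj, h.symm⟩

theorem mn_ex (hr : ∀ i, A i i) (y : Fin (n+1) → ℝ) (i : Fin (n+1)) :
    ∃ j, A i j ∧ y j = mn A y i := by
  obtain ⟨j, hj, h⟩ := Finset.exists_mem_eq_inf' (nbr_ne A i) y
  exact ⟨j, (mem_nbr hr).1 hj, h.symm⟩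

theorem stepF_mono (hr : ∀ i, A i i) (D : ℝ) : Monotone (stepF A D) := by
  intro y z h i
  unfold stepF
  split_ifs
  · exact le_rfl
  · exact le_rfl
  · obtain ⟨a, ha, ea⟩ := mx_ex hr y i
    obtain ⟨b, hb, eb⟩ := mn_ex hr z i
    have h1 := le_mx hr z ha
    have h2 := mn_le hr y hb
    have h3 := h a
    have h4 := h b
    linarith

theorem stepF_cont (D : ℝ) : Continuous (stepF A D) := by
  refine continuous_pi fun i => ?_
  unfold stepF
  split_ifs
  · exact continuous_const
  · exact continuous_const
  · refine Continuous.div_const (Continuous.add ?_ ?_) 2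
    · exact Continuous.finset_inf'_apply (nbr_ne A i) (fun j _ => continuous_apply j)
    · exact Continuous.finset_sup'_apply (nbr_ne A i) (fun j _ => continuous_apply j)

theorem fixed_le (hr : ∀ i, A i i) (hc : ∀ i j, Relation.ReflTransGen A i j) {D : ℝ}
    {u v : Fin (n+1) → ℝ} (hu : stepF A D u = u) (hv : stepF A D v = v) (i : Fin (n+1)) :
    u i ≤ v i := by
  classical
  obtain ⟨p, -, hp⟩ := Finset.exists_max_image Finset.univ (fun i => u i - v i) ⟨i, by simp⟩
  set m := u p - v p with hm
  by_contra hcon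
  have hmpos : 0 < m := by have := hp i (by simp); linarith
  obtain ⟨q, hq, hq'⟩ := Finset.exists_max_image
    (Finset.univ.filter (fun i => u i - v i = m)) u ⟨p, by simp [hm]⟩
  have hq0 : u q - v q = m := by simpa using hq
  have key : ∀ a b, (u a - v a = m ∧ u a = u q) → A a b → (u b - v b = m ∧ u b = u q) := by
    rintro a b ⟨h1, h2⟩ hab
    have eu := congrFun hu a
    have ev := congrFun hv a
    unfold stepF at eu ev
    split_ifs at eu ev
    · linarith
    · linarith
    · obtain ⟨c, hc1, hc2⟩ := mx_ex hr u a
      obtain ⟨d, hd1, hd2⟩ := mn_ex hr v a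
      have e1 := le_mx hr v hc1
      have e2 := mn_le hr u hd1
      have e3 := hp c (by simp)
      have e4 := hp d (by simp)
      have e5 : u c - v c = m := by linarith
      have e6 := hq' c (by simp [e5])
      have e7 := le_mx hr u hab
      have e8 := le_mx hr v hab
      have e9 := mn_le hr u hab
      have e10 := mn_le hr v hab
      constructor <;> linarith
  have : ∀ b, Relation.ReflTransGen A q b → (u b - v b = m ∧ u b = u q) := by
    intro b hb
    induction hb with
    | refl => exact ⟨hq0, rfl⟩
    | tail _ h ih => exact key _ _ ih h
  have h0 := (this 0 (hc _ _)).1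
  have eu := congrFun hu 0
  have ev := congrFun hv 0
  simp only [stepF, if_true] at eu ev
  linarith

theorem conv (hr : ∀ i, A i i) (hc : ∀ i j, Relation.ReflTransGen A i j) {D : ℝ} (hD : 0 < D)
    (w : Fin (n+1) → ℝ) (hn : 0 < n) (h0 : w 0 = 0) (h1 : w (Fin.last n) = D) :
    ∃ u, stepF A D u = u ∧ ∀ i, Tendsto (fun t => (stepF A D)^[t] w i) atTop (𝓝 (u i)) := by
  classical
  have hmono := stepF_mono hr D
  obtain ⟨C, hC⟩ : ∃ C, ∀ i, |w i| ≤ C := by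
    obtain ⟨p, hp⟩ := Finite.exists_max (fun i => |w i|)
    exact ⟨_, hp⟩
  have hCD : D ≤ C := by have := hC (Fin.last n); rw [h1] at this; exact (le_abs_self _).trans this
  have hlast : Fin.last n ≠ 0 := by
    intro h; have := congrArg Fin.val h; simp at this; omega
  let a : Fin (n+1) → ℝ := fun i => if i = 0 then 0 else if i = Fin.last n then D else C
  let b : Fin (n+1) → ℝ := fun i => if i = 0 then 0 else if i = Fin.last n then D else -C
  have ha : stepF A D a ≤ a := by
    intro i
    by_cases i0 : i = 0
    · simp [stepF, a, i0]
    by_cases i1 : i = Fin.last n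
    · simp [stepF, a, i1, hlast]
    have hh : ∀ j, a j ≤ C := by intro j; simp only [a]; split_ifs <;> linarith
    obtain ⟨c, -, hc2⟩ := mx_ex hr a i
    have := mn_le hr a (hr i)
    have h3 := hh c
    have h4 := hh i
    have h5 : a i = C := by simp [a, i0, i1]
    simp only [stepF, i0, i1, if_false]
    linarith
  have hb : b ≤ stepF A D b := by
    intro i
    by_cases i0 : i = 0
    · simp [stepF, b, i0]
    by_cases i1 : i = Fin.last n
    · simp [stepF, b, i1, hlast]
    have hh : ∀ j, -C ≤ b j := by intro j; simp only [b]; split_ifs <;> linarith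
    obtain ⟨c, -, hc2⟩ := mn_ex hr b i
    have := le_mx hr b (hr i)
    have h3 := hh c
    have h4 := hh i
    have h5 : b i = -C := by simp [b, i0, i1]
    simp only [stepF, i0, i1, if_false]
    linarith
  have hwa : w ≤ a := by
    intro i; simp only [a]; split_ifs with i0 i1
    · rw [i0, h0]
    · rw [i1, h1]
    · exact (le_abs_self _).trans (hC i)
  have hbw : b ≤ w := by
    intro i; simp only [b]; split_ifs with i0 i1
    · rw [i0, h0]
    · rw [i1, h1]
    · have := hC i; have := neg_abs_le (w i); linarith
  have anti := hmono.antitone_iterate_of_map_le ha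
  have mon := hmono.monotone_iterate_of_le_map hb
  have s1 : ∀ t, (stepF A D)^[t] w ≤ (stepF A D)^[t] a := fun t => hmono.iterate t hwa
  have s2 : ∀ t, (stepF A D)^[t] b ≤ (stepF A D)^[t] w := fun t => hmono.iterate t hbw
  obtain ⟨u, hu⟩ : ∃ u, Tendsto (fun t => (stepF A D)^[t] a) atTop (𝓝 u) := by
    refine ⟨fun i => ⨅ t, (stepF A D)^[t] a i, tendsto_pi_nhds.2 fun i => ?_⟩
    refine tendsto_atTop_ciInf (fun s t h => anti h i) ⟨b i, ?_⟩
    rintro _ ⟨t, rfl⟩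
    exact (mon (Nat.zero_le t) i).trans ((s2 t i).trans (s1 t i))
  obtain ⟨v, hv⟩ : ∃ u, Tendsto (fun t => (stepF A D)^[t] b) atTop (𝓝 u) := by
    refine ⟨fun i => ⨆ t, (stepF A D)^[t] b i, tendsto_pi_nhds.2 fun i => ?_⟩
    refine tendsto_atTop_ciSup (fun s t h => mon h i) ⟨a i, ?_⟩
    rintro _ ⟨t, rfl⟩
    exact ((s2 t i).trans (s1 t i)).trans (anti (Nat.zero_le t) i)
  have fu : stepF A D u = u := isFixedPt_of_tendsto_iterate hu (stepF_cont D).continuousAt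
  have fv : stepF A D v = v := isFixedPt_of_tendsto_iterate hv (stepF_cont D).continuousAt
  have huv : u = v := funext fun i => le_antisymm (fixed_le hr hc fu fv i) (fixed_le hr hc fv fu i)
  subst huv
  refine ⟨u, fu, fun i => ?_⟩
  exact tendsto_of_tendsto_of_tendsto_of_le_of_le (tendsto_pi_nhds.1 hv i) (tendsto_pi_nhds.1 hu i)
    (fun t => s2 t i) (fun t => s1 t i)

/-- Structure of the limit: a geodesic chain of maximal slope. -/
theorem limit_chain (hr : ∀ i, A i i) (hs : ∀ i j, A i j → A j i)
    (hc : ∀ i j, Relation.ReflTransGen A i j) {D : ℝ} (hD : 0 < D)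
    (u : Fin (n+1) → ℝ) (hu0 : u 0 = 0) (hun : u (Fin.last n) = D)
    (hu : ∀ i, i ≠ 0 → i ≠ Fin.last n → u i = (mn A u i + mx A u i) / 2) :
    ∃ δ : ℝ, 0 < δ ∧ (∀ i j, A i j → u j - u i ≤ δ) ∧ 
      (∀ i j, A i j → u j - u i = δ → 0 ≤ u i ∧ u j ≤ D) ∧
      ∃ k : ℕ, 1 ≤ k ∧ D = k * δ ∧ ∃ c : ℕ → Fin (n+1), c 0 = 0 ∧ c k = Fin.last n ∧
        (∀ j, j ≤ k → u (c j) = j * δ) ∧ ∀ j, j < k → A (c j) (c (j+1)) := by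
  classical
  obtain ⟨⟨p, q⟩, hpq, hmax⟩ := Finset.exists_max_image
    (Finset.univ.filter (fun e : Fin (n+1) × Fin (n+1) => A e.1 e.2)) (fun e => u e.2 - u e.1)
    ⟨(0,0), by simp [hr]⟩
  have hpq : A p q := by simpa using hpq
  set δ := u q - u p with hδ
  have hle : ∀ i j, A i j → u j - u i ≤ δ := fun i j h => hmax (i, j) (by simp [h])
  have hpos : 0 < δ := by
    by_contra hcon
    have : ∀ b, Relation.ReflTransGen A 0 b → u b ≤ 0 := by
      intro b hb
      induction hb with
      | refl => exact hu0.le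
      | tail _ h ih => have := hle _ _ h; linarith
    have := this _ (hc 0 (Fin.last n))
    linarith
  have fwd : ∀ i j, A i j → u j - u i = δ → j ≠ 0 → j ≠ Fin.last n →
      ∃ z, A j z ∧ u z - u j = δ := by
    intro i j hij e j0 j1
    obtain ⟨z, hz, ez⟩ := mx_ex hr u j
    have := hle _ _ hz
    have := mn_le hr u (hs _ _ hij)
    have := hu j j0 j1
    exact ⟨z, hz, by linarith⟩
  have bwd : ∀ i j, A i j → u j - u i = δ → i ≠ 0 → i ≠ Fin.last n →
      ∃ z, A z i ∧ u i - u z = δ := by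
    intro i j hij e j0 j1
    obtain ⟨z, hz, ez⟩ := mn_ex hr u i
    have := hle _ _ (hs _ _ hz)
    have := le_mx hr u hij
    have := hu i j0 j1
    exact ⟨z, hs _ _ hz, by linarith⟩
  obtain ⟨q', hq1, hq2⟩ := Finset.exists_max_image
    (Finset.univ.filter (fun j => ∃ i, A i j ∧ u j - u i = δ)) u ⟨q, by simp; exact ⟨p, hpq, rfl⟩⟩
  obtain ⟨p', hp1, hp2⟩ := Finset.exists_min_image
    (Finset.univ.filter (fun i => ∃ j, A i j ∧ u j - u i = δ)) u ⟨p, by simp; exact ⟨q, hpq, rfl⟩⟩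
  simp only [Finset.mem_filter, Finset.mem_univ, true_and] at hq1 hq2 hp1 hp2
  obtain ⟨qi, hqi, eqi⟩ := hq1
  obtain ⟨pj, hpj, epj⟩ := hp1
  have hqf : q' = 0 ∨ q' = Fin.last n := by
    by_contra! h
    obtain ⟨z, hz, ez⟩ := fwd _ _ hqi eqi h.1 h.2
    have := hq2 z ⟨_, hz, ez⟩
    linarith
  have hpf : p' = 0 ∨ p' = Fin.last n := by
    by_contra! h
    obtain ⟨z, hz, ez⟩ := bwd _ _ hpj epj h.1 h.2
    have := hp2 z ⟨_, hz, ez⟩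
    linarith
  have h1 := hp2 qi ⟨_, hqi, eqi⟩
  have h2 := hq2 pj ⟨_, hpj, epj⟩
  have hp'0 : p' = 0 := by
    rcases hpf with h | h
    · exact h
    · rcases hqf with h' | h' <;> rw [h] at h1 epj <;> rw [h'] at h2 eqi <;> linarith
  have hq'n : q' = Fin.last n := by
    rcases hqf with h | h
    · rw [h] at eqi; rw [hp'0] at h1; linarith
    · exact h
  subst hp'0 hq'n
  have hbd : ∀ i j, A i j → u j - u i = δ → 0 ≤ u i ∧ u j ≤ D := by
    intro i j h e
    have := hp2 i ⟨_, h, e⟩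
    have := hq2 j ⟨_, h, e⟩
    constructor <;> linarith
  refine ⟨δ, hpos, hle, hbd, ?_⟩
  -- the next map
  let nx : Fin (n+1) → Fin (n+1) := fun i =>
    if h : ∃ j, A i j ∧ u j - u i = δ then h.choose else i
  have nxs : ∀ i, (∃ j, A i j ∧ u j - u i = δ) → A i (nx i) ∧ u (nx i) - u i = δ := by
    intro i h
    have : nx i = h.choose := by simp only [nx]; rw [dif_pos h]
    rw [this]; exact h.choose_spec
  let c : ℕ → Fin (n+1) := fun j => nx^[j] 0
  have cs : ∀ j, c (j+1) = nx (c j) := fun j => Function.iterate_succ_apply' nx j 0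
  have good : ∀ k, (∀ j, j ≤ k → c j ≠ Fin.last n) →
      (u (c k) = k * δ ∧ ∃ j, A (c k) j ∧ u j - u (c k) = δ) := by
    intro k
    induction k with
    | zero => intro _; exact ⟨by simp [c, hu0], ⟨pj, hpj, epj⟩⟩
    | succ k ih =>
      intro h
      obtain ⟨i1, i2⟩ := ih (fun j hj => h j (by omega))
      obtain ⟨n1, n2⟩ := nxs _ i2
      rw [← cs] at n1 n2
      have e : u (c (k+1)) = ((k+1 : ℕ) : ℝ) * δ := by push_cast; linarith
      refine ⟨e, fwd _ _ n1 n2 ?_ (h _ le_rfl)⟩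
      intro h0
      rw [h0, hu0] at e
      have : 0 < ((k+1 : ℕ) : ℝ) * δ := by positivity
      linarith
  have hex : ∃ k, c k = Fin.last n := by
    by_contra! hno
    obtain ⟨k, hk⟩ := exists_nat_gt (D / δ)
    have g1 := (good k (fun j _ => hno j))
    obtain ⟨g1, j, g2, g3⟩ := g1
    have := (hbd _ _ g2 g3).2
    rw [div_lt_iff₀ hpos] at hk
    linarith
  have hk0 : Nat.find hex ≠ 0 := by
    intro h
    have := Nat.find_spec hex
    rw [h] at this
    have h' : u (c 0) = 0 := hu0
    rw [this] at h'; linarith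
  obtain ⟨K, hK⟩ := Nat.exists_eq_succ_of_ne_zero hk0
  have hlt : ∀ j, j < K + 1 → c j ≠ Fin.last n := fun j hj => Nat.find_min hex (by omega)
  have hck : c (K+1) = Fin.last n := by have := Nat.find_spec hex; rwa [hK] at this
  have ed : ∀ j, j < K+1 → A (c j) (c (j+1)) ∧ u (c (j+1)) - u (c j) = δ ∧ u (c j) = j * δ := by
    intro j hj
    obtain ⟨g1, g2⟩ := good j (fun i hi => hlt i (by omega))
    obtain ⟨n1, n2⟩ := nxs _ g2
    rw [← cs] at n1 n2
    exact ⟨n1, n2, g1⟩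
  have eu : ∀ j, j ≤ K+1 → u (c j) = j * δ := by
    intro j hj
    rcases Nat.lt_or_eq_of_le hj with h | h
    · exact (ed j h).2.2
    · subst h
      obtain ⟨_, a, b⟩ := ed K (by omega)
      push_cast; linarith
  refine ⟨K+1, by omega, ?_, c, rfl, hck, eu, fun j hj => (ed j hj).1⟩
  have := eu (K+1) le_rfl
  rw [hck, hun] at this; exact this

end

section
variable {n : ℕ} {V : ℝ} {x : ℕ → Fin (n+1) → ℝ}

theorem rpos_spec (t : ℕ) (i : Fin (n+1)) (hV : 0 < V) :
    IsGreatest (x t '' {j | |x t j - x t i| ≤ V}) (rpos V x t i) := by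
  have hf : (x t '' {j | |x t j - x t i| ≤ V}).Finite := Set.toFinite _
  have hne : (x t '' {j | |x t j - x t i| ≤ V}).Nonempty := ⟨x t i, i, by simp [hV.le], rfl⟩
  exact ⟨hne.csSup_mem hf, fun y hy => le_csSup hf.bddAbove hy⟩

theorem lpos_spec (t : ℕ) (i : Fin (n+1)) (hV : 0 < V) :
    IsLeast (x t '' {j | |x t j - x t i| ≤ V}) (lpos V x t i) := by
  have hf : (x t '' {j | |x t j - x t i| ≤ V}).Finite := Set.toFinite _
  have hne : (x t '' {j | |x t j - x t i| ≤ V}).Nonempty := ⟨x t i, i, by simp [hV.le], rfl⟩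
  exact ⟨hne.csInf_mem hf, fun y hy => csInf_le hf.bddBelow hy⟩

theorem edge_step (hV : 0 < V) {t : ℕ}
    (hstep : ∀ i, x (t+1) i = x t i ∨ x (t + 1) i = (lpos V x t i + rpos V x t i) / 2)
    {i j : Fin (n+1)} (h : |x t i - x t j| ≤ V) : |x (t+1) i - x (t+1) j| ≤ V := by
  wlog hij : x t i ≤ x t j generalizing i j
  · rw [abs_sub_comm] at h ⊢
    exact this h (le_of_not_ge hij)
  have bnd : ∀ i, x t i - V ≤ lpos V x t i ∧ rpos V x t i ≤ x t i + V ∧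
      lpos V x t i ≤ x t i ∧ x t i ≤ rpos V x t i := by
    intro i
    obtain ⟨⟨a, ha, ea⟩, la⟩ := lpos_spec (x := x) t i hV
    obtain ⟨⟨b, hb, eb⟩, lb⟩ := rpos_spec (x := x) t i hV
    have hi : x t i ∈ (x t '' {j | |x t j - x t i| ≤ V}) := ⟨i, by simp [hV.le], rfl⟩
    have := la hi
    have := lb hi
    simp only [Set.mem_ofPred_eq, abs_le] at ha hb
    refine ⟨?_, ?_, ?_, ?_⟩ <;> linarith
  have h1 : x t j ≤ rpos V x t i := (rpos_spec t i hV).2 ⟨j, by simpa [abs_sub_comm] using h, rfl⟩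
  have h2 : lpos V x t j ≤ x t i := (lpos_spec t j hV).2 ⟨i, h, rfl⟩
  obtain ⟨a1, a2, a3, a4⟩ := bnd i
  obtain ⟨b1, b2, b3, b4⟩ := bnd j
  rw [abs_le] at h ⊢
  rcases hstep i with e | e <;> rcases hstep j with f | f <;> rw [e, f] <;>
    constructor <;> linarith
end

/-- (Existence of the Primary Chain) From some time on there is a mutual chain
of robots connecting the left faulty robot to the right faulty robot. -/
theorem primary_chain_exists
    (n : ℕ) (hn : 2 ≤ n) (V D : ℝ) (hV : 0 < V) (hD : 0 < D)
    (x : ℕ → Fin (n + 1) → ℝ)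
    (hfault0 : ∀ t : ℕ, x t 0 = 0)
    (hfaultn : ∀ t : ℕ, x t (Fin.last n) = D)
    (hupd : ∀ t : ℕ, ∀ i : Fin (n + 1), i ≠ 0 → i ≠ Fin.last n →
      x (t + 1) i = (lpos V x t i + rpos V x t i) / 2)
    (hconn : ∀ i j : Fin (n + 1),
      Relation.ReflTransGen (fun a b : Fin (n + 1) => |x 0 a - x 0 b| ≤ V) i j)
    : ∃ t₀ : ℕ, ∃ k : ℕ, 1 ≤ k ∧ ∃ c : ℕ → Fin (n + 1),
      c 0 = 0 ∧ c k = Fin.last n ∧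
      ∀ t : ℕ, t₀ ≤ t → ∀ j : ℕ, j < k →
        rpos V x t (c j) = x t (c (j + 1)) ∧
        lpos V x t (c (j + 1)) = x t (c j) := by
  classical
  let A : Fin (n+1) → Fin (n+1) → Prop := fun i j => ∃ t, |x t i - x t j| ≤ V
  have hstep : ∀ t i, x (t+1) i = x t i ∨ x (t + 1) i = (lpos V x t i + rpos V x t i) / 2 := by
    intro t i
    by_cases i0 : i = 0
    · left; rw [i0, hfault0, hfault0]
    by_cases i1 : i = Fin.last n
    · left; rw [i1, hfaultn, hfaultn]
    · right; exact hupd t i i0 i1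
  have hr : ∀ i, A i i := fun i => ⟨0, by simp [hV.le]⟩
  have hs : ∀ i j, A i j → A j i := by
    rintro i j ⟨t, h⟩
    exact ⟨t, by rwa [abs_sub_comm]⟩
  have hc : ∀ i j, Relation.ReflTransGen A i j := by
    intro i j
    have h := hconn i j
    induction h with
    | refl => exact Relation.ReflTransGen.refl
    | tail _ h ih => exact ih.tail ⟨0, h⟩
  have hstab : ∀ᶠ t in atTop, ∀ i j, (|x t i - x t j| ≤ V ↔ A i j) := by
    rw [eventually_all]; intro i
    rw [eventually_all]; intro j
    by_cases h : A i j
    · obtain ⟨s, hs'⟩ := h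
      filter_upwards [eventually_ge_atTop s] with t ht
      refine ⟨fun h => ⟨t, h⟩, fun _ => ?_⟩
      induction t, ht using Nat.le_induction with
      | base => exact hs'
      | succ t _ ih => exact edge_step hV (hstep t) ih
    · exact Eventually.of_forall fun t => ⟨fun h => ⟨t, h⟩, fun h' => absurd h' h⟩
  obtain ⟨T, hT⟩ := eventually_atTop.1 hstab
  have hrm : ∀ t, T ≤ t → ∀ i, rpos V x t i = mx A (x t) i := by
    intro t ht i
    obtain ⟨⟨a, ha, ea⟩, la⟩ := rpos_spec (x := x) t i hV
    apply le_antisymm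
    · rw [← ea]
      exact le_mx hr (x t) (hs _ _ ((hT t ht _ _).1 ha))
    · obtain ⟨b, hb, eb⟩ := mx_ex hr (x t) i
      rw [← eb]
      exact la ⟨b, (hT t ht _ _).2 (hs _ _ hb), rfl⟩
  have hlm : ∀ t, T ≤ t → ∀ i, lpos V x t i = mn A (x t) i := by
    intro t ht i
    obtain ⟨⟨a, ha, ea⟩, la⟩ := lpos_spec (x := x) t i hV
    apply le_antisymm
    · obtain ⟨b, hb, eb⟩ := mn_ex hr (x t) i
      rw [← eb]
      exact la ⟨b, (hT t ht _ _).2 (hs _ _ hb), rfl⟩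
    · rw [← ea]
      exact mn_le hr (x t) (hs _ _ ((hT t ht _ _).1 ha))
  have hlast : Fin.last n ≠ 0 := by
    intro h; have := congrArg Fin.val h; simp at this; omega
  have hF : ∀ t, T ≤ t → x (t+1) = stepF A D (x t) := by
    intro t ht
    funext i
    unfold stepF
    split_ifs with i0 i1
    · rw [i0, hfault0]
    · rw [i1, hfaultn]
    · rw [hupd t i i0 i1, hrm t ht, hlm t ht]
  have hit : ∀ s, x (s + T) = (stepF A D)^[s] (x T) := by
    intro s
    induction s with
    | zero => simp
    | succ s ih =>
      rw [Function.iterate_succ_apply', ← ih, ← hF _ (by omega)]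
      congr 1; omega
  obtain ⟨u, hfix, hlim⟩ := conv hr hc hD (x T) (by omega) (hfault0 T) (hfaultn T)
  have hlim' : ∀ i, Tendsto (fun t => x t i) atTop (𝓝 (u i)) := by
    intro i
    rw [← tendsto_add_atTop_iff_nat T]
    simpa only [hit] using hlim i
  have hu0 : u 0 = 0 := by have := congrFun hfix 0; simp only [stepF, if_true] at this; exact this.symm
  have hun : u (Fin.last n) = D := by
    have := congrFun hfix (Fin.last n); simp only [stepF, if_true, hlast, if_false] at this
    exact this.symm
  have hu : ∀ i, i ≠ 0 → i ≠ Fin.last n → u i = (mn A u i + mx A u i) / 2 := by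
    intro i i0 i1
    have := congrFun hfix i; simp only [stepF, i0, i1, if_false] at this
    exact this.symm
  obtain ⟨δ, hδ, hle, hbd, k, hk, hDk, c, c0, ck, huc, hAc⟩ := limit_chain hr hs hc hD u hu0 hun hu
  have hδV : δ ≤ V := by
    have h1 := huc 0 (by omega)
    have h2 := huc 1 hk
    have ha := hAc 0 (by omega)
    have hl : Tendsto (fun t => x t (c 1) - x t (c 0)) atTop (𝓝 (u (c 1) - u (c 0))) :=
      (hlim' _).sub (hlim' _)
    have : u (c 1) - u (c 0) ≤ V := by
      refine le_of_tendsto hl ?_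
      filter_upwards [hstab] with t ht
      have := (ht _ _).2 ha
      rw [abs_le] at this; simp only [zero_add] at this; linarith
    rw [h1, h2] at this
    simpa using this
  rcases eq_or_lt_of_le hδV with hVe | hlt
  · -- stationary chain
    have vis : ∀ t, T ≤ t → ∀ j, j < k → x t (c (j+1)) - x t (c j) ≤ V := by
      intro t ht j hj
      have := (hT t ht _ _).2 (hAc j hj)
      rw [abs_le] at this; linarith
    have up : ∀ t, T ≤ t → ∀ j, j ≤ k → x t (c j) ≤ j * V := by
      intro t ht j
      induction j with
      | zero => intro _; rw [c0, hfault0]; simp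
      | succ j ih =>
        intro hj
        have := ih (by omega)
        have := vis t ht j (by omega)
        push_cast; linarith
    have dn : ∀ t, T ≤ t → ∀ m j, j + m = k → j * V ≤ x t (c j) := by
      intro t ht m
      induction m with
      | zero =>
        intro j hj
        have : j = k := by omega
        subst this
        rw [ck, hfaultn, hDk, hVe]
      | succ m ih =>
        intro j hj
        have h1 := ih (j+1) (by omega)
        have := vis t ht j (by omega)
        push_cast at h1; linarith
    have ex : ∀ t, T ≤ t → ∀ j, j ≤ k → x t (c j) = j * V := fun t ht j hj =>
      le_antisymm (up t ht j hj) (dn t ht (k - j) j (by omega))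
    refine ⟨T, k, hk, c, c0, ck, fun t ht j hj => ?_⟩
    have e1 := ex t ht j (by omega)
    have e2 := ex t ht (j+1) (by omega)
    push_cast at e2
    have hA := hAc j hj
    rw [hrm t ht, hlm t ht]
    constructor
    · refine le_antisymm ?_ (le_mx hr _ hA)
      obtain ⟨b, hb, eb⟩ := mx_ex hr (x t) (c j)
      have := (hT t ht _ _).2 hb
      rw [abs_le] at this; linarith
    · refine le_antisymm (mn_le hr _ (hs _ _ hA)) ?_
      obtain ⟨b, hb, eb⟩ := mn_ex hr (x t) (c (j+1))
      have := (hT t ht _ _).2 hb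
      rw [abs_le] at this; linarith
  · have hA : ∀ a b, |u a - u b| ≤ δ → A a b := by
      intro a b h
      have hl : Tendsto (fun t => |x t a - x t b|) atTop (𝓝 |u a - u b|) :=
        ((hlim' _).sub (hlim' _)).abs
      obtain ⟨t, ht⟩ := (hl.eventually (gt_mem_nhds (lt_of_le_of_lt h hlt))).exists
      exact ⟨t, ht.le⟩
    have hA' : ∀ a b, A a b ↔ |u a - u b| ≤ δ := by
      intro a b
      refine ⟨fun h => ?_, hA a b⟩
      rw [abs_le]
      have := hle _ _ h
      have := hle _ _ (hs _ _ h)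
      constructor <;> linarith
    -- equal limits give equal positions
    have hend0 : ∀ b, u b = 0 → b = 0 := by
      intro b hb
      by_contra hb0
      have hb1 : b ≠ Fin.last n := by rintro rfl; linarith
      have h1 : u (c 1) = δ := by simpa using huc 1 hk
      have h2 := le_mx hr u (hA b (c 1) (by rw [hb, h1, zero_sub, abs_neg, abs_of_pos hδ]))
      obtain ⟨z, hz, ez⟩ := mn_ex hr u b
      have h3 := hu b hb0 hb1
      have h4 := hle _ _ (hs _ _ hz)
      have h5 := (hbd z b (hs _ _ hz) (by linarith)).1
      linarith
    have hendn : ∀ b, u b = D → b = Fin.last n := by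
      intro b hb
      by_contra hb1
      have hb0 : b ≠ 0 := by rintro rfl; linarith
      obtain ⟨K, rfl⟩ : ∃ K, k = K + 1 := ⟨k - 1, by omega⟩
      have h1 := huc K (by omega)
      push_cast at hDk
      have h2 := mn_le hr u (hA b (c K) (by
        rw [hb, h1, hDk, abs_of_nonneg] <;> linarith))
      obtain ⟨z, hz, ez⟩ := mx_ex hr u b
      have h3 := hu b hb0 hb1
      have h4 := hle _ _ hz
      have h5 := (hbd b z hz (by linarith)).2
      linarith
    have heq : ∀ t, T + 1 ≤ t → ∀ a b, u a = u b → x t a = x t b := by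
      intro t ht a b hab
      by_cases a0 : a = 0
      · rw [a0, hend0 b (by rw [← hab, a0, hu0])]
      by_cases a1 : a = Fin.last n
      · rw [a1, hendn b (by rw [← hab, a1, hun])]
      have b0 : b ≠ 0 := fun h => a0 (hend0 a (by rw [hab, h, hu0]))
      have b1 : b ≠ Fin.last n := fun h => a1 (hendn a (by rw [hab, h, hun]))
      obtain ⟨s, rfl⟩ : ∃ s, t = s + 1 := ⟨t - 1, by omega⟩
      rw [hF s (by omega)]
      have hn' : nbr A a = nbr A b := by
        ext z; rw [mem_nbr hr, mem_nbr hr, hA', hA', hab]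
      simp only [stepF, a0, a1, b0, b1, if_false, mx, mn, hn']
    have hord : ∀ᶠ t in atTop, ∀ a b, u a < u b → x t a < x t b := by
      rw [eventually_all]; intro a
      rw [eventually_all]; intro b
      by_cases h : u a < u b
      · filter_upwards [(hlim' a).eventually_lt (hlim' b) h] with t ht _ using ht
      · exact Eventually.of_forall fun t h' => absurd h' h
    obtain ⟨T', hT'⟩ := eventually_atTop.1 hord
    have hmono : ∀ t, max (T+1) T' ≤ t → ∀ a b, u a ≤ u b → x t a ≤ x t b := by
      intro t ht a b hab
      rcases eq_or_lt_of_le hab with h | h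
      · exact (heq t (le_trans (le_max_left _ _) ht) a b h).le
      · exact (hT' t (le_trans (le_max_right _ _) ht) a b h).le
    refine ⟨max (T+1) T', k, hk, c, c0, ck, fun t ht j hj => ?_⟩
    have htT : T ≤ t := le_trans (Nat.le_succ T) (le_trans (le_max_left _ _) ht)
    have e1 := huc j (by omega)
    have e2 := huc (j+1) (by omega)
    push_cast at e2
    have hAj := hAc j hj
    rw [hrm t htT, hlm t htT]
    constructor
    · refine le_antisymm ?_ (le_mx hr _ hAj)
      obtain ⟨b, hb, eb⟩ := mx_ex hr (x t) (c j)
      rw [← eb]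
      have := hle _ _ hb
      exact hmono t ht _ _ (by linarith)
    · refine le_antisymm (mn_le hr _ (hs _ _ hAj)) ?_
      obtain ⟨b, hb, eb⟩ := mn_ex hr (x t) (c (j+1))
      rw [← eb]
      have := hle _ _ (hs _ _ hb)
      exact hmono t ht _ _ (by linarith)
end

section
/- (Distance Propagation) In the robot model on a line, let a and b be non-faulty robots such that for every time t: r(a,t) = x t b and l(b,t) = x t a (a and b are mutually chained), l(a,t) < x t a (some visible robot lies strictly to the left of a), and r(b,t) > x t b (some visible robot lies strictly to the right of b). Suppose x t b − x t a → V as t → ∞. Then x t a − l(a,t) → V and r(b,t) − x t b → V as t → ∞. -/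
open Filter Topology

/-- (Distance Propagation) When the distance between two mutually chained
robots tends to `V`, this limit behaviour propagates to their farthest left
and farthest right visible neighbours. -/
theorem distance_propagation
    (n : ℕ) (hn : 2 ≤ n) (V D : ℝ) (hV : 0 < V) (hD : 0 < D)
    (x : ℕ → Fin (n + 1) → ℝ)
    (hfault0 : ∀ t : ℕ, x t 0 = 0)
    (hfaultn : ∀ t : ℕ, x t (Fin.last n) = D)
    (hupd : ∀ t : ℕ, ∀ i : Fin (n + 1), i ≠ 0 → i ≠ Fin.last n →
      x (t + 1) i = (lpos V x t i + rpos V x t i) / 2)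
    (a b : Fin (n + 1)) (ha0 : a ≠ 0) (han : a ≠ Fin.last n)
    (hb0 : b ≠ 0) (hbn : b ≠ Fin.last n)
    (hmutual : ∀ t : ℕ, rpos V x t a = x t b ∧ lpos V x t b = x t a)
    (hleft : ∀ t : ℕ, lpos V x t a < x t a)
    (hright : ∀ t : ℕ, rpos V x t b > x t b)
    (hd : Tendsto (fun t => x t b - x t a) atTop (nhds V)) :
    Tendsto (fun t => x t a - lpos V x t a) atTop (nhds V) ∧
      Tendsto (fun t => rpos V x t b - x t b) atTop (nhds V) := by
  have hne : ∀ t i, (x t '' {j | |x t j - x t i| ≤ V}).Nonempty := fun t i =>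
    ⟨x t i, i, by simpa using hV.le, rfl⟩
  have hp : ∀ t, x t a - lpos V x t a ≤ V := by
    intro t
    have : x t a - V ≤ lpos V x t a := by
      apply le_csInf (hne t a)
      rintro _ ⟨j, hj, rfl⟩
      have := (abs_le.mp (Set.mem_setOf.mp hj)).1
      linarith
    linarith
  have hq : ∀ t, rpos V x t b - x t b ≤ V := by
    intro t
    have : rpos V x t b ≤ x t b + V := by
      apply csSup_le (hne t b)
      rintro _ ⟨j, hj, rfl⟩
      have := (abs_le.mp (Set.mem_setOf.mp hj)).2
      linarith
    linarith
  have hstep : ∀ t, 2 * (x (t + 1) b - x (t + 1) a) =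
      (x t a - lpos V x t a) + (rpos V x t b - x t b) := by
    intro t
    rw [hupd t a ha0 han, hupd t b hb0 hbn, (hmutual t).1, (hmutual t).2]
    ring
  have hlim : Tendsto (fun t => 2 * (x (t + 1) b - x (t + 1) a) - V) atTop (nhds V) := by
    have h1 := (((tendsto_add_atTop_iff_nat 1).mpr hd).const_mul 2).sub_const V
    have h2 : 2 * V - V = V := by ring
    rw [h2] at h1
    exact h1
  refine ⟨tendsto_of_tendsto_of_tendsto_of_le_of_le hlim tendsto_const_nhds ?_ hp,
    tendsto_of_tendsto_of_tendsto_of_le_of_le hlim tendsto_const_nhds ?_ hq⟩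
  · intro t
    have h1 := hstep t
    have h2 := hq t
    show 2 * (x (t + 1) b - x (t + 1) a) - V ≤ x t a - lpos V x t a
    linarith
  · intro t
    have h1 := hstep t
    have h2 := hp t
    show 2 * (x (t + 1) b - x (t + 1) a) - V ≤ rpos V x t b - x t b
    linarith
end

section
/- (Convergence of the Primary Chain) In the robot model on a line, suppose there exist an integer k ≥ 1 and robots i₀ = 0, i₁, …, i_k = n, with i₁, …, i_{k−1} non-faulty, such that for every time t and every 0 ≤ j ≤ k−1: r(i_j, t) = x t i_{j+1} and l(i_{j+1}, t) = x t i_j (the sequence is a mutual chain anchored at the two faulty robots at all times). Then for every 0 ≤ j ≤ k, x t i_j → (D/k)·j as t → ∞; i.e., the robots of the primary chain converge to equidistant positions between 0 and D. -/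
open Filter Topology

theorem chain_aux (k : ℕ) (hk : 1 ≤ k) (e : ℕ → ℕ → ℝ)
    (h0 : ∀ t, e t 0 = 0) (hkk : ∀ t, e t k = 0)
    (hs : ∀ t j, j + 1 < k → e (t + 1) (j + 1) = (e t j + e t (j + 2)) / 2)
    (j : ℕ) (hj : j ≤ k) : Tendsto (fun t => e t j) atTop (nhds 0) := by
  have hk1 : (1 : ℝ) ≤ k := by exact_mod_cast hk
  obtain ⟨ρ, hρ⟩ : ∃ ρ : ℝ, ρ = 1 - 1 / (k : ℝ) ^ 2 := ⟨_, rfl⟩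
  have hk2 : (1 : ℝ) ≤ (k : ℝ) ^ 2 := one_le_pow₀ hk1
  have hρ0 : 0 ≤ ρ := by
    rw [hρ, sub_nonneg, div_le_one (by positivity)]; exact hk2
  have hρ1 : ρ < 1 := by
    have : 0 < 1 / (k : ℝ) ^ 2 := by positivity
    linarith
  have hρk : (1 - ρ) * (k : ℝ) ^ 2 = 1 := by
    rw [hρ]; field_simp; ring
  obtain ⟨C, hC⟩ : ∃ C : ℝ, C = ∑ i ∈ Finset.range (k + 1), |e 0 i| := ⟨_, rfl⟩
  have hC0 : 0 ≤ C := by rw [hC]; exact Finset.sum_nonneg fun _ _ => abs_nonneg _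
  have key : ∀ t j, j ≤ k → |e t j| ≤ C * ρ ^ t * ((j : ℝ) * (k - j)) := by
    intro t
    induction t with
    | zero =>
      intro j hj
      rcases Nat.eq_zero_or_pos j with rfl | hp
      · simp [h0]
      rcases hj.eq_or_lt with rfl | hlt
      · simp [hkk]
      have h1 : |e 0 j| ≤ C := by
        rw [hC]
        exact Finset.single_le_sum (f := fun i => |e 0 i|) (fun _ _ => abs_nonneg _)
          (Finset.mem_range.2 (by omega))
      have hj1 : (1 : ℝ) ≤ j := by exact_mod_cast hp
      have hj2 : (j : ℝ) + 1 ≤ k := by exact_mod_cast hlt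
      have h2 : (1 : ℝ) ≤ (j : ℝ) * (k - j) := by nlinarith
      have := mul_le_mul_of_nonneg_left h2 hC0
      simp only [pow_zero, mul_one]
      linarith
    | succ t ih =>
      intro j hj
      rcases Nat.eq_zero_or_pos j with rfl | hp
      · simp [h0]
      rcases hj.eq_or_lt with rfl | hlt
      · simp [hkk]
      obtain ⟨i, rfl⟩ : ∃ i, j = i + 1 := ⟨j - 1, by omega⟩
      rw [hs t i hlt]
      have a1 := ih i (by omega)
      have a2 := ih (i + 2) (by omega)
      have hA : 0 ≤ C * ρ ^ t := by positivity
      have h3 : |(e t i + e t (i + 2)) / 2| ≤ (|e t i| + |e t (i + 2)|) / 2 := by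
        rw [abs_div, abs_two]
        have := abs_add_le (e t i) (e t (i + 2))
        linarith
      have hj2 : (i : ℝ) + 1 + 1 ≤ k := by exact_mod_cast hlt
      have hi0 : (0 : ℝ) ≤ i := Nat.cast_nonneg i
      push_cast at a1 a2 ⊢
      have h4 : ((i : ℝ) + 1) * (k - (i + 1)) ≤ (k : ℝ) ^ 2 := by nlinarith
      have h5 := mul_le_mul_of_nonneg_left h4 (by linarith : (0 : ℝ) ≤ 1 - ρ)
      have h6 : ((i : ℝ) + 1) * (k - (i + 1)) - 1 ≤ ρ * (((i : ℝ) + 1) * (k - (i + 1))) := by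
        linarith
      have h7 := mul_le_mul_of_nonneg_left h6 hA
      rw [pow_succ]
      linarith
  have hl : Tendsto (fun t => C * ρ ^ t * ((j : ℝ) * (k - j))) atTop (nhds 0) := by
    have := ((tendsto_pow_atTop_nhds_zero_of_lt_one hρ0 hρ1).const_mul C).mul_const
      ((j : ℝ) * (k - j))
    simpa using this
  exact squeeze_zero_norm (fun t => by simpa using key t j hj) hl

/-- (Convergence of the Primary Chain) The robots of the primary chain
converge to equidistant positions between `0` and `D`. -/
theorem primary_chain_convergence
    (n : ℕ) (hn : 2 ≤ n) (V D : ℝ) (hV : 0 < V) (hD : 0 < D)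
    (x : ℕ → Fin (n + 1) → ℝ)
    (hfault0 : ∀ t : ℕ, x t 0 = 0)
    (hfaultn : ∀ t : ℕ, x t (Fin.last n) = D)
    (hupd : ∀ t : ℕ, ∀ i : Fin (n + 1), i ≠ 0 → i ≠ Fin.last n →
      x (t + 1) i = (lpos V x t i + rpos V x t i) / 2)
    (k : ℕ) (hk : 1 ≤ k) (c : ℕ → Fin (n + 1))
    (hc0 : c 0 = 0) (hck : c k = Fin.last n)
    (hinterior : ∀ j : ℕ, 1 ≤ j → j ≤ k - 1 → c j ≠ 0 ∧ c j ≠ Fin.last n)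
    (hchain : ∀ t : ℕ, ∀ j : ℕ, j < k →
      rpos V x t (c j) = x t (c (j + 1)) ∧
      lpos V x t (c (j + 1)) = x t (c j)) :
    ∀ j : ℕ, j ≤ k →
      Tendsto (fun t => x t (c j)) atTop (nhds (D / (k : ℝ) * (j : ℝ))) := by
  have hk0 : (k : ℝ) ≠ 0 := by
    have : k ≠ 0 := by omega
    exact_mod_cast this
  intro j hj
  have h := chain_aux k hk (fun t j => x t (c j) - D / (k : ℝ) * (j : ℝ))
    (by intro t; simp [hc0, hfault0])
    (by intro t; simp only [hck, hfaultn]; field_simp; ring)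
    (by
      intro t i hi
      obtain ⟨a, b⟩ := hinterior (i + 1) (by omega) (by omega)
      have h1 := hupd t (c (i + 1)) a b
      rw [(hchain t i (by omega)).2, (hchain t (i + 1) hi).1] at h1
      simp only [h1]
      push_cast
      ring) j hj
  have h2 := h.add_const (D / (k : ℝ) * (j : ℝ))
  simpa using h2
end

section
/- (Convergence of an Anchored Mutual Chain) In the robot model on a line, let y₁, …, y_k be non-faulty robots such that for every time t: r(y_i, t) = x t y_{i+1} and l(y_{i+1}, t) = x t y_i for all 1 ≤ i ≤ k−1 (a mutual chain at all times), l(y₁, t) < x t y₁ and r(y_k, t) > x t y_k (the anchors are distinct from the chain's endpoints), and suppose there are real numbers A and B with l(y₁, t) → A and r(y_k, t) → B as t → ∞. Then for every 1 ≤ i ≤ k, x t y_i → A + i·(B − A)/(k+1) as t → ∞; i.e., the chain converges to a configuration of equidistant robots between A and B. -/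
open Filter Topology

theorem chain_aux_s17 (k : ℕ) (e : ℕ → ℕ → ℝ)
    (hrec : ∀ t i, i < k → e (t + 1) (i + 1) = (e t i + e t (i + 2)) / 2)
    (h0 : Tendsto (fun t => e t 0) atTop (nhds 0))
    (h1 : Tendsto (fun t => e t (k + 1)) atTop (nhds 0)) :
    ∀ i, i ≤ k + 1 → Tendsto (fun t => e t i) atTop (nhds 0) := by
  intro i hi
  obtain ⟨w, hw⟩ : ∃ w : ℕ → ℝ, ∀ i, w i = 1 + (i : ℝ) * ((k : ℝ) + 1 - i) := ⟨_, fun _ => rfl⟩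
  have hw1 : ∀ i, i ≤ k + 1 → 1 ≤ w i := by
    intro i hi
    have : (i : ℝ) ≤ k + 1 := by exact_mod_cast hi
    have h2 : (0 : ℝ) ≤ i := Nat.cast_nonneg i
    rw [hw]
    nlinarith [mul_nonneg h2 (sub_nonneg.2 this)]
  obtain ⟨M, hM⟩ : ∃ M : ℝ, M = 1 + ((k : ℝ) + 1) ^ 2 := ⟨_, rfl⟩
  have hwM : ∀ i, i ≤ k + 1 → w i ≤ M := by
    intro i hi
    have : (i : ℝ) ≤ k + 1 := by exact_mod_cast hi
    have h2 : (0 : ℝ) ≤ i := Nat.cast_nonneg i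
    rw [hw, hM]
    nlinarith
  have hM1 : 1 < M := by rw [hM]; have : (0:ℝ) ≤ k := Nat.cast_nonneg k; nlinarith
  obtain ⟨ρ, hρ⟩ : ∃ ρ : ℝ, ρ = 1 - 1 / M := ⟨_, rfl⟩
  have hinv : 1 / M < 1 := by rw [div_lt_one (by linarith)]; exact hM1
  have hinv0 : 0 < 1 / M := by positivity
  have hρ0 : 0 ≤ ρ := by linarith
  have hρ1 : ρ < 1 := by linarith
  have hρw : ∀ i, i ≤ k + 1 → w i - 1 ≤ ρ * w i := by
    intro i hi
    have : 1 / M * w i ≤ 1 := by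
      rw [one_div_mul_eq_div, div_le_one (by linarith)]; exact hwM i hi
    rw [hρ]; linarith
  rw [Metric.tendsto_atTop]
  intro ε hε
  obtain ⟨T0, hT0⟩ := (Metric.tendsto_atTop.1 h0) (ε / 2) (by linarith)
  obtain ⟨T1, hT1⟩ := (Metric.tendsto_atTop.1 h1) (ε / 2) (by linarith)
  obtain ⟨T, hTT⟩ : ∃ T, T = max T0 T1 := ⟨_, rfl⟩
  obtain ⟨C, hC⟩ : ∃ C : ℝ, C = ∑ j ∈ Finset.range (k + 2), |e T j| := ⟨_, rfl⟩
  have hC0 : 0 ≤ C := by rw [hC]; exact Finset.sum_nonneg fun _ _ => abs_nonneg _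
  have key : ∀ s j, j ≤ k + 1 → |e (T + s) j| ≤ ε / 2 + C * ρ ^ s * w j := by
    intro s
    induction s with
    | zero =>
      intro j hj
      have : |e T j| ≤ C := by
        rw [hC]
        exact Finset.single_le_sum (f := fun j => |e T j|) (fun _ _ => abs_nonneg _)
          (Finset.mem_range.2 (by omega))
      have := mul_le_mul_of_nonneg_left (hw1 j hj) hC0
      simp only [add_zero, pow_zero, mul_one] at *
      linarith
    | succ s ih =>
      intro j hj
      have hnn : 0 ≤ C * ρ ^ (s + 1) * w j :=
        mul_nonneg (mul_nonneg hC0 (pow_nonneg hρ0 _)) (by linarith [hw1 j hj])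
      rcases Nat.eq_zero_or_pos j with rfl | hjp
      · have := hT0 (T + (s + 1)) (by omega)
        rw [Real.dist_0_eq_abs] at this
        linarith
      rcases Nat.eq_or_lt_of_le hj with rfl | hjk
      · have := hT1 (T + (s + 1)) (by omega)
        rw [Real.dist_0_eq_abs] at this
        linarith
      obtain ⟨i, rfl⟩ : ∃ i, j = i + 1 := ⟨j - 1, by omega⟩
      rw [← add_assoc, hrec (T + s) i (by omega)]
      have a1 := ih i (by omega)
      have a2 := ih (i + 2) (by omega)
      have a3 : |(e (T + s) i + e (T + s) (i + 2)) / 2|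
          ≤ (|e (T + s) i| + |e (T + s) (i + 2)|) / 2 := by
        rw [abs_div, abs_two]
        have := abs_add_le (e (T + s) i) (e (T + s) (i + 2))
        linarith
      have a4 : w i + w (i + 2) = 2 * (w (i + 1) - 1) := by
        rw [hw, hw, hw]; push_cast; ring
      have a5 := mul_le_mul_of_nonneg_left (hρw (i + 1) hj) (mul_nonneg hC0 (pow_nonneg hρ0 s))
      have a6 : C * ρ ^ s * w i + C * ρ ^ s * w (i + 2) = 2 * (C * ρ ^ s * (w (i + 1) - 1)) := by
        rw [← mul_add, a4]; ring
      have a7 : C * ρ ^ (s + 1) * w (i + 1) = C * ρ ^ s * (ρ * w (i + 1)) := by ring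
      linarith
  have hlim : Tendsto (fun s : ℕ => C * ρ ^ s * w i) atTop (nhds 0) := by
    have := ((tendsto_pow_atTop_nhds_zero_of_lt_one hρ0 hρ1).const_mul C).mul_const (w i)
    simpa using this
  obtain ⟨S, hS⟩ := (Metric.tendsto_atTop.1 hlim) (ε / 2) (by linarith)
  refine ⟨T + S, fun t ht => ?_⟩
  have b1 := hS (t - T) (by omega)
  have b2 := key (t - T) i hi
  rw [show T + (t - T) = t by omega] at b2
  rw [Real.dist_0_eq_abs] at b1 ⊢
  linarith [le_abs_self (C * ρ ^ (t - T) * w i)]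

/-- (Convergence of an Anchored Mutual Chain) A mutual chain whose anchors
converge to `A` and `B` converges to a configuration of equidistant robots
between `A` and `B`. -/
theorem anchored_chain_convergence
    (n : ℕ) (hn : 2 ≤ n) (V D : ℝ) (hV : 0 < V) (hD : 0 < D)
    (x : ℕ → Fin (n + 1) → ℝ)
    (hfault0 : ∀ t : ℕ, x t 0 = 0)
    (hfaultn : ∀ t : ℕ, x t (Fin.last n) = D)
    (hupd : ∀ t : ℕ, ∀ i : Fin (n + 1), i ≠ 0 → i ≠ Fin.last n →
      x (t + 1) i = (lpos V x t i + rpos V x t i) / 2)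
    (k : ℕ) (hk : 1 ≤ k) (y : ℕ → Fin (n + 1))
    (hnonfaulty : ∀ i : ℕ, 1 ≤ i → i ≤ k → y i ≠ 0 ∧ y i ≠ Fin.last n)
    (hchain : ∀ t : ℕ, ∀ i : ℕ, 1 ≤ i → i ≤ k - 1 →
      rpos V x t (y i) = x t (y (i + 1)) ∧
      lpos V x t (y (i + 1)) = x t (y i))
    (hanchorL : ∀ t : ℕ, lpos V x t (y 1) < x t (y 1))
    (hanchorR : ∀ t : ℕ, rpos V x t (y k) > x t (y k))
    (A B : ℝ)
    (hA : Tendsto (fun t => lpos V x t (y 1)) atTop (nhds A))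
    (hB : Tendsto (fun t => rpos V x t (y k)) atTop (nhds B)) :
    ∀ i : ℕ, 1 ≤ i → i ≤ k →
      Tendsto (fun t => x t (y i)) atTop
        (nhds (A + (i : ℝ) * (B - A) / ((k : ℝ) + 1))) := by
  intro i hi1 hik
  obtain ⟨u, hu⟩ : ∃ u : ℕ → ℕ → ℝ, ∀ t i, u t i = if i = 0 then lpos V x t (y 1) else
    if i = k + 1 then rpos V x t (y k) else x t (y i) := ⟨_, fun _ _ => rfl⟩
  have hu0 : ∀ t, u t 0 = lpos V x t (y 1) := fun t => by rw [hu]; simp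
  have huk : ∀ t, u t (k + 1) = rpos V x t (y k) := fun t => by rw [hu]; simp
  have hui : ∀ t i, 1 ≤ i → i ≤ k → u t i = x t (y i) := fun t i h h' => by
    rw [hu, if_neg (by omega), if_neg (by omega)]
  have hk0 : (k : ℝ) + 1 ≠ 0 := by positivity
  have main := chain_aux_s17 k (fun t i => u t i - (A + (i : ℝ) * (B - A) / ((k : ℝ) + 1)))
    ?_ ?_ ?_ i (by omega)
  · have := main.add_const (A + (i : ℝ) * (B - A) / ((k : ℝ) + 1))
    simp only [sub_add_cancel, zero_add] at this
    exact this.congr fun t => hui t i hi1 hik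
  · intro t i hi
    have hl : lpos V x t (y (i + 1)) = u t i := by
      rcases Nat.eq_zero_or_pos i with rfl | hp
      · rw [hu0]
      · rw [hui t i hp (by omega), (hchain t i hp (by omega)).2]
    have hr : rpos V x t (y (i + 1)) = u t (i + 2) := by
      rcases Nat.eq_or_lt_of_le (show i + 1 ≤ k from hi) with h | hp
      · subst h; rw [huk]
      · rw [hui t (i + 2) (by omega) (by omega), (hchain t (i + 1) (by omega) (by omega)).1]
    have hx := hupd t (y (i + 1)) (hnonfaulty (i + 1) (by omega) hi).1
      (hnonfaulty (i + 1) (by omega) hi).2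
    rw [hui (t + 1) (i + 1) (by omega) hi, hx, hl, hr]
    push_cast
    ring
  · simpa [hu0] using hA.sub_const A
  · have : A + ((k + 1 : ℕ) : ℝ) * (B - A) / ((k : ℝ) + 1) = B := by
      push_cast; field_simp; ring
    simp only [huk, this]
    simpa using hB.sub_const B
end
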